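/- Assume 0 ≤ α < N, p, q > 0, ρ > 0, and that the Dirichlet eigenpair hypothesis holds for (Ω, λ₁, φ). If μ ≤ C_{H,Ω}, (p + q − 1)·|γ_*| = N − α + 2, and q > 1, then the inequality (E): −Δu − μ|x|^{−2}u ≥ (|x|^{−α} * u^p) u^q has no positive solution in C_Ω^ρ. -/

import Mathlib

open MeasureTheory Real Set
open scoped ENNReal NNReal

noncomputable section

/-- Euclidean space `ℝ^N`. -/
abbrev Euc (N : ℕ) := EuclideanSpace ℝ (Fin N)

/-- The Euclidean Laplacian `Δu(x) = ∑ ∂²u/∂xᵢ²(x)`, the trace of the Hessian. -/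
def lap (N : ℕ) (u : Euc N → ℝ) (x : Euc N) : ℝ :=
  ∑ i : Fin N,
    iteratedFDeriv ℝ 2 u x ![EuclideanSpace.single i 1, EuclideanSpace.single i 1]

/-- The open cone `C_Ω^ρ = {x : |x| > ρ, x/|x| ∈ Ω}`. -/
def coneGT (N : ℕ) (ρ : ℝ) (Ω : Set (Euc N)) : Set (Euc N) :=
  {x | ρ < ‖x‖ ∧ ‖x‖⁻¹ • x ∈ Ω}

/-- The full open cone `C_Ω = {x ≠ 0 : x/|x| ∈ Ω}`. -/
def cone (N : ℕ) (Ω : Set (Euc N)) : Set (Euc N) :=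
  {x | x ≠ 0 ∧ ‖x‖⁻¹ • x ∈ Ω}

/-- `Ω` is a nonempty, connected, relatively open subset of the unit sphere `S^{N-1}`. -/
def IsConeDomain (N : ℕ) (Ω : Set (Euc N)) : Prop :=
  Ω ⊆ Metric.sphere (0 : Euc N) 1 ∧ IsConnected Ω ∧
    IsOpen {ω : Metric.sphere (0 : Euc N) 1 | (ω : Euc N) ∈ Ω}

/-- The convolution `(|x|^{-α} * f)(x) = ∫_{C_Ω^ρ} f(y)|x-y|^{-α} dy`, valued in `[0,∞]`. -/
def rieszConv (N : ℕ) (α ρ : ℝ) (Ω : Set (Euc N)) (f : Euc N → ℝ) (x : Euc N) : ℝ≥0∞ :=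
  ∫⁻ y in coneGT N ρ Ω, ENNReal.ofReal (f y * ‖x - y‖ ^ (-α))

/-- Dirichlet eigenpair hypothesis for `(Ω, λ₁, φ)`: `φ` is continuous on the closure of `Ω`,
positive on `Ω`, vanishing on the relative boundary, with maximum `1`, and its 0-homogeneous
extension `Φ(x) = φ(x/|x|)` is `C²` on the open cone and satisfies `ΔΦ = -λ₁|x|⁻²Φ`. -/
structure DirichletEigenpair (N : ℕ) (Ω : Set (Euc N)) (lam1 : ℝ) (φ : Euc N → ℝ) : Prop where
  contOn : ContinuousOn φ (closure Ω)
  pos : ∀ ω ∈ Ω, 0 < φ ω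
  bdryZero : ∀ ω ∈ closure Ω \ Ω, φ ω = 0
  le_one : ∀ ω ∈ closure Ω, φ ω ≤ 1
  max_one : ∃ ω ∈ closure Ω, φ ω = 1
  smoothExt : ContDiffOn ℝ 2 (fun x => φ (‖x‖⁻¹ • x)) (cone N Ω)
  eigen : ∀ x ∈ cone N Ω,
    lap N (fun y => φ (‖y‖⁻¹ • y)) x = -lam1 * ‖x‖ ^ (-(2:ℝ)) * φ (‖x‖⁻¹ • x)

/-- The Hardy constant `C_{H,Ω} = λ₁ + ((N-2)/2)²`. -/
def CHconst (N : ℕ) (lam1 : ℝ) : ℝ := lam1 + (((N : ℝ) - 2) / 2) ^ 2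

/-- The smaller root `γ_*` of `γ(γ + N - 2) = λ₁ - μ`. -/
def gammaStar (N : ℕ) (lam1 μ : ℝ) : ℝ :=
  (-((N : ℝ) - 2) - Real.sqrt (((N : ℝ) - 2) ^ 2 + 4 * (lam1 - μ))) / 2

/-- A positive (classical) solution of `(E) : -Δu - μ|x|⁻²u ≥ (|x|^{-α} * uᵖ) u^q` in `C_Ω^ρ`. -/
def IsPosSolE (N : ℕ) (ρ μ α p q : ℝ) (Ω : Set (Euc N)) (u : Euc N → ℝ) : Prop :=
  ContDiffOn ℝ 2 u (coneGT N ρ Ω) ∧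
  ContinuousOn u (closure (coneGT N ρ Ω)) ∧
  (∀ x ∈ coneGT N ρ Ω, 0 < u x) ∧
  (∀ x ∈ coneGT N ρ Ω, rieszConv N α ρ Ω (fun y => u y ^ p) x < ⊤) ∧
  (∀ x ∈ coneGT N ρ Ω,
    (rieszConv N α ρ Ω (fun y => u y ^ p) x).toReal * u x ^ q ≤
      -lap N u x - μ * ‖x‖ ^ (-(2:ℝ)) * u x)

/-- A positive solution of `(Z) : -Δu - μ|x|⁻²u ≥ (∫_{C_Ω^ρ} uᵖ) u^q` in `C_Ω^ρ`. -/
def IsPosSolZ (N : ℕ) (ρ μ p q : ℝ) (Ω : Set (Euc N)) (u : Euc N → ℝ) : Prop :=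
  ContDiffOn ℝ 2 u (coneGT N ρ Ω) ∧
  ContinuousOn u (closure (coneGT N ρ Ω)) ∧
  (∀ x ∈ coneGT N ρ Ω, 0 < u x) ∧
  (∫⁻ y in coneGT N ρ Ω, ENNReal.ofReal (u y ^ p)) < ⊤ ∧
  (∀ x ∈ coneGT N ρ Ω,
    (∫⁻ y in coneGT N ρ Ω, ENNReal.ofReal (u y ^ p)).toReal * u x ^ q ≤
      -lap N u x - μ * ‖x‖ ^ (-(2:ℝ)) * u x)

/-- A positive solution `(u, v)` of the system `(S)` in `C_Ω^ρ`. -/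
def IsPosSolS (N : ℕ) (ρ μ α p q s : ℝ) (Ω : Set (Euc N)) (u v : Euc N → ℝ) : Prop :=
  ContDiffOn ℝ 2 u (coneGT N ρ Ω) ∧ ContinuousOn u (closure (coneGT N ρ Ω)) ∧
  ContDiffOn ℝ 2 v (coneGT N ρ Ω) ∧ ContinuousOn v (closure (coneGT N ρ Ω)) ∧
  (∀ x ∈ coneGT N ρ Ω, 0 < u x) ∧ (∀ x ∈ coneGT N ρ Ω, 0 < v x) ∧
  (∀ x ∈ coneGT N ρ Ω, rieszConv N α ρ Ω (fun y => v y ^ p) x < ⊤) ∧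
  (∀ x ∈ coneGT N ρ Ω,
    (rieszConv N α ρ Ω (fun y => v y ^ p) x).toReal * v x ^ q ≤
      -lap N u x - μ * ‖x‖ ^ (-(2:ℝ)) * u x) ∧
  (∀ x ∈ coneGT N ρ Ω, u x ^ s ≤ -lap N v x - μ * ‖x‖ ^ (-(2:ℝ)) * v x)

open Filter Topology

/-- second order derivative data of a function of one variable -/
def D2At (g : ℝ → ℝ) (t b c : ℝ) : Prop :=
  ∃ g' : ℝ → ℝ, (∀ᶠ s in 𝓝 t, HasDerivAt g (g' s) s) ∧ g' t = b ∧ HasDerivAt g' c t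

theorem D2At.unique {g : ℝ → ℝ} {t b c b' c' : ℝ} (h : D2At g t b c) (h' : D2At g t b' c') :
    b = b' ∧ c = c' := by
  obtain ⟨g1, h1, h2, h3⟩ := h
  obtain ⟨k1, k1', k2, k3⟩ := h'
  have : g1 =ᶠ[𝓝 t] k1 := by
    filter_upwards [h1, k1'] with s a b using a.unique b
  refine ⟨by rw [← h2, ← k2]; exact this.self_of_nhds, ?_⟩
  exact (h3.congr_of_eventuallyEq this.symm).unique k3

theorem D2At.congr {g k : ℝ → ℝ} {t b c : ℝ} (h : D2At g t b c) (e : k =ᶠ[𝓝 t] g) :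
    D2At k t b c := by
  obtain ⟨g1, h1, h2, h3⟩ := h
  refine ⟨g1, ?_, h2, h3⟩
  filter_upwards [h1, e.eventuallyEq_nhds] with s a b using a.congr_of_eventuallyEq b

theorem D2At.mul {g k : ℝ → ℝ} {t b c b' c' : ℝ} (h : D2At g t b c) (h' : D2At k t b' c') :
    D2At (fun s => g s * k s) t (b * k t + g t * b') (c * k t + 2 * (b * b') + g t * c') := by
  obtain ⟨g1, h1, h2, h3⟩ := h
  obtain ⟨k1, k1', k2, k3⟩ := h'
  refine ⟨fun s => g1 s * k s + g s * k1 s, ?_, by simp [h2, k2], ?_⟩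
  · filter_upwards [h1, k1'] with s a b using a.mul b
  · have := (h3.mul k1'.self_of_nhds).add (h1.self_of_nhds.mul k3)
    exact this.congr_deriv (by rw [h2, k2]; ring)

theorem D2At.add {g k : ℝ → ℝ} {t b c b' c' : ℝ} (h : D2At g t b c) (h' : D2At k t b' c') :
    D2At (fun s => g s + k s) t (b + b') (c + c') := by
  obtain ⟨g1, h1, h2, h3⟩ := h
  obtain ⟨k1, k1', k2, k3⟩ := h'
  refine ⟨fun s => g1 s + k1 s, ?_, by simp [h2, k2], h3.add k3⟩
  filter_upwards [h1, k1'] with s a b using a.add b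

theorem D2At.continuousAt {g : ℝ → ℝ} {t b c : ℝ} (h : D2At g t b c) : ContinuousAt g t := by
  obtain ⟨g1, h1, h2, h3⟩ := h
  exact h1.self_of_nhds.continuousAt

theorem D2At.comp {g F : ℝ → ℝ} {t b c b' c' : ℝ} (h : D2At F (g t) b' c') (h' : D2At g t b c) :
    D2At (fun s => F (g s)) t (b' * b) (c' * b ^ 2 + b' * c) := by
  have hc := h'.continuousAt
  obtain ⟨g1, h1, h2, h3⟩ := h'
  obtain ⟨k1, k1', k2, k3⟩ := h
  refine ⟨fun s => k1 (g s) * g1 s, ?_, by simp [h2, k2], ?_⟩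
  · filter_upwards [h1, hc.eventually k1'] with s a b using b.comp s a
  · have := (k3.comp t h1.self_of_nhds).mul h3
    exact this.congr_deriv (by simp only [Function.comp]; rw [h2, k2]; ring)

theorem D2At.of_contDiffAt {f : ℝ → ℝ} {t : ℝ} (h : ContDiffAt ℝ 2 f t) :
    D2At f t (deriv f t) (deriv (deriv f) t) := by
  refine ⟨deriv f, ?_, rfl, ?_⟩
  · have := h.eventually (by simp)
    filter_upwards [this] with s hs
    exact (hs.differentiableAt (by simp)).hasDerivAt
  · have : ContDiffAt ℝ 1 (fderiv ℝ f) t := h.fderiv_right (by norm_num)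
    have h2 : DifferentiableAt ℝ (fderiv ℝ f) t := this.differentiableAt (by simp)
    have : DifferentiableAt ℝ (deriv f) t := by
      have := h2.clm_apply (differentiableAt_const (1:ℝ))
      simpa using this
    exact this.hasDerivAt

theorem D2At.line {E : Type*} [NormedAddCommGroup E] [NormedSpace ℝ E] {u : E → ℝ} {x : E}
    (h : ContDiffAt ℝ 2 u x) (e : E) :
    D2At (fun t : ℝ => u (x + t • e)) 0 (fderiv ℝ u x e) (iteratedFDeriv ℝ 2 u x ![e, e]) := by
  have hl : ∀ t : ℝ, HasDerivAt (fun t : ℝ => x + t • e) e t := fun t => by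
    have := ((hasDerivAt_id t).smul_const e).const_add x
    simpa using this
  have hl0 : Tendsto (fun t : ℝ => x + t • e) (𝓝 0) (𝓝 x) := by
    have := (hl 0).continuousAt.tendsto
    simpa using this
  refine ⟨fun t => fderiv ℝ u (x + t • e) e, ?_, by simp, ?_⟩
  · have := hl0.eventually (h.eventually (by simp))
    filter_upwards [this] with t ht
    exact (ht.differentiableAt (by simp)).hasFDerivAt.comp_hasDerivAt t (hl t)
  · have : ContDiffAt ℝ 1 (fderiv ℝ u) x := h.fderiv_right (by norm_num)
    have h2 : DifferentiableAt ℝ (fderiv ℝ u) (x + (0:ℝ) • e) := by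
      simpa using this.differentiableAt (by simp)
    have h3 := h2.hasFDerivAt.comp_hasDerivAt (0:ℝ) (hl 0)
    have h4 := h3.clm_apply (hasDerivAt_const (0:ℝ) e)
    rw [iteratedFDeriv_two_apply]
    simpa using h4

/-- partial derivative -/
abbrev pd (N : ℕ) (u : Euc N → ℝ) (x : Euc N) (i : Fin N) : ℝ :=
  fderiv ℝ u x (EuclideanSpace.single i 1)
/-- second partial derivative -/
abbrev pd2 (N : ℕ) (u : Euc N → ℝ) (x : Euc N) (i : Fin N) : ℝ :=
  iteratedFDeriv ℝ 2 u x ![EuclideanSpace.single i 1, EuclideanSpace.single i 1]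

theorem D2At.normSq {N : ℕ} (x : Euc N) (i : Fin N) :
    D2At (fun t : ℝ => ‖x + t • (EuclideanSpace.single i (1:ℝ) : Euc N)‖ ^ 2) 0 (2 * x i) 2 := by
  have : (fun t : ℝ => ‖x + t • (EuclideanSpace.single i (1:ℝ) : Euc N)‖ ^ 2) =
      fun t => ‖x‖ ^ 2 + 2 * x i * t + t ^ 2 := by
    funext t
    rw [norm_add_sq_real, inner_smul_right, norm_smul]
    simp [EuclideanSpace.inner_single_right]
    ring
  rw [this]
  refine ⟨fun t => 2 * x i + 2 * t, ?_, by simp, ?_⟩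
  · filter_upwards with s
    have := (((hasDerivAt_id s).const_mul (2 * x i)).const_add (‖x‖ ^ 2)).add
      ((hasDerivAt_id s).pow 2)
    exact this.congr_deriv (by simp)
  · have := ((hasDerivAt_id (0:ℝ)).const_mul 2).const_add (2 * x i)
    simpa using this

theorem D2At.logNorm {N : ℕ} (x : Euc N) (hx : x ≠ 0) (i : Fin N) :
    D2At (fun t : ℝ => Real.log ‖x + t • (EuclideanSpace.single i (1:ℝ) : Euc N)‖) 0
      (x i / ‖x‖ ^ 2) (1 / ‖x‖ ^ 2 - 2 * x i ^ 2 / ‖x‖ ^ 4) := by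
  have hn : ‖x‖ ≠ 0 := by simpa using hx
  have h1 : D2At (fun s => (1/2) * Real.log s) (‖x‖^2) (1 / (2 * ‖x‖^2)) (-1 / (2 * ‖x‖^4)) := by
    refine ⟨fun s => 1 / 2 * s⁻¹, ?_, by field_simp, ?_⟩
    · filter_upwards [isOpen_ne.mem_nhds (show ‖x‖^2 ≠ 0 by positivity)] with s hs
      exact (Real.hasDerivAt_log hs).const_mul _
    · have := (hasDerivAt_inv (show ‖x‖^2 ≠ 0 by positivity)).const_mul (1/2:ℝ)
      exact this.congr_deriv (by field_simp)
  have h2 := D2At.comp (g := fun t : ℝ => ‖x + t • (EuclideanSpace.single i (1:ℝ) : Euc N)‖ ^ 2)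
    (t := 0) (F := fun s => (1/2) * Real.log s) (b' := (1 / (2 * ‖x‖^2)))
    (c' := (-1 / (2 * ‖x‖^4))) (by simp only [zero_smul, add_zero]; exact h1) (D2At.normSq x i)
  have : (fun t : ℝ => Real.log ‖x + t • (EuclideanSpace.single i (1:ℝ) : Euc N)‖) =
      fun t => (1/2) * Real.log (‖x + t • (EuclideanSpace.single i (1:ℝ) : Euc N)‖ ^ 2) := by
    funext t
    rw [Real.log_pow]; push_cast; ring
  rw [this]
  convert h2 using 1
  · field_simp
  · field_simp
    try ring

theorem lap_radial_mul {N : ℕ} {x : Euc N} (hx : x ≠ 0) {k K : ℝ → ℝ} {Φ : Euc N → ℝ}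
    {k1 k2 K1 K2 : ℝ} (hk : D2At k (Real.log ‖x‖) k1 k2) (hK : D2At K (Φ x) K1 K2)
    (hΦ : ContDiffAt ℝ 2 Φ x) (hhom : fderiv ℝ Φ x x = 0)
    (hs : ContDiffAt ℝ 2 (fun y => k (Real.log ‖y‖) * K (Φ y)) x) :
    lap N (fun y => k (Real.log ‖y‖) * K (Φ y)) x =
      K (Φ x) * ((k2 + (N - 2) * k1) / ‖x‖ ^ 2) +
      k (Real.log ‖x‖) * (K2 * ∑ i, pd N Φ x i ^ 2 + K1 * lap N Φ x) := by
  have hn : ‖x‖ ≠ 0 := by simpa using hx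
  have key : ∀ i : Fin N, pd2 N (fun y => k (Real.log ‖y‖) * K (Φ y)) x i =
      K (Φ x) * (k2 * (x i ^ 2 / ‖x‖ ^ 4) + k1 * (1 / ‖x‖ ^ 2 - 2 * (x i ^ 2 / ‖x‖ ^ 4)))
      + 2 * k1 * K1 / ‖x‖ ^ 2 * (x i * pd N Φ x i)
      + k (Real.log ‖x‖) * (K2 * pd N Φ x i ^ 2 + K1 * pd2 N Φ x i) := by
    intro i
    have a1 := D2At.comp (g := fun t : ℝ =>
      Real.log ‖x + t • (EuclideanSpace.single i (1:ℝ) : Euc N)‖) (t := 0)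
      (by simpa using hk) (D2At.logNorm x hx i)
    have a2 := D2At.comp (g := fun t : ℝ => Φ (x + t • (EuclideanSpace.single i (1:ℝ) : Euc N)))
      (t := 0) (by simpa using hK) (D2At.line hΦ _)
    have a3 := (a1.mul a2).unique (D2At.line hs (EuclideanSpace.single i (1:ℝ)))
    have := a3.2
    simp only [zero_smul, add_zero] at this
    unfold pd2
    rw [← this]
    field_simp
    try ring
  have s1 : ∑ i, x i ^ 2 = ‖x‖ ^ 2 := by
    rw [EuclideanSpace.norm_eq, Real.sq_sqrt (by positivity)]; simp
  have s2 : ∑ i, x i * pd N Φ x i = 0 := by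
    rw [← hhom]
    have hx' : x = ∑ i, x i • (EuclideanSpace.single i (1:ℝ) : Euc N) := by
      ext j; simp [Pi.single_apply]
    have : fderiv ℝ Φ x x = fderiv ℝ Φ x (∑ i, x i • (EuclideanSpace.single i (1:ℝ) : Euc N)) := by
      rw [← hx']
    rw [this, map_sum]
    simp
  unfold lap
  rw [Finset.sum_congr rfl (fun i _ => key i)]
  simp only [Finset.sum_add_distrib, ← Finset.mul_sum, Finset.sum_sub_distrib, ← Finset.sum_div, s1, s2]
  simp only [Finset.sum_const, Finset.card_univ, Fintype.card_fin, nsmul_eq_mul]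
  field_simp
  ring

theorem lap_concave_le {N : ℕ} {x : Euc N} {u w : Euc N → ℝ} {F : ℝ → ℝ} {f1 f2 : ℝ}
    (hu : ContDiffAt ℝ 2 u x) (hw : ContDiffAt ℝ 2 w x) (hwx : 0 < w x)
    (hF : D2At F (u x / w x) f1 f2) (hf2 : f2 ≤ 0)
    (hv : ContDiffAt ℝ 2 (fun y => w y * F (u y / w y)) x) :
    lap N (fun y => w y * F (u y / w y)) x ≤
      (F (u x / w x) - u x / w x * f1) * lap N w x + f1 * lap N u x := by
  have hT : ContDiffAt ℝ 2 (fun y => u y / w y) x := hu.div hw hwx.ne'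
  unfold lap
  rw [Finset.mul_sum, Finset.mul_sum, ← Finset.sum_add_distrib]
  apply Finset.sum_le_sum
  intro i _
  set e : Euc N := EuclideanSpace.single i (1:ℝ)
  have hl0 : Tendsto (fun t : ℝ => x + t • e) (𝓝 0) (𝓝 x) := by
    have : Continuous (fun t : ℝ => x + t • e) := by fun_prop
    have := this.tendsto 0
    simpa using this
  have a1 := D2At.line hw e
  have a2 := D2At.line hT e
  have a3 := D2At.comp (g := fun t : ℝ => u (x + t • e) / w (x + t • e)) (t := 0)
    (F := F) (b' := f1) (c' := f2) (by simpa using hF) a2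
  have a4 := ((a1.mul a3).unique (D2At.line hv e)).2
  have a5 : D2At (fun t : ℝ => u (x + t • e)) 0 _ _ := (a1.mul a2).congr (by
    filter_upwards [hl0.eventually (hw.continuousAt.eventually_ne hwx.ne')] with t ht
    field_simp)
  have a6 := (a5.unique (D2At.line hu e)).2
  simp only [zero_smul, add_zero] at a4 a6
  rw [← a4, ← a6]
  have : w x * (f2 * (fderiv ℝ (fun y => u y / w y) x e) ^ 2) ≤ 0 :=
    mul_nonpos_of_nonneg_of_nonpos hwx.le (mul_nonpos_of_nonpos_of_nonneg hf2 (sq_nonneg _))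
  linarith

theorem integral_fderiv_zero {N : ℕ} {f : Euc N → ℝ} (hf : ContDiff ℝ 1 f)
    (hc : HasCompactSupport f) (e : Euc N) : 
    Integrable (fun x => fderiv ℝ f x e) ∧ ∫ x, fderiv ℝ f x e = 0 := by
  have h1 : Integrable (fun x => fderiv ℝ f x e) := by
    apply Continuous.integrable_of_hasCompactSupport
    · exact (hf.continuous_fderiv (by simp)).clm_apply continuous_const
    · exact hc.fderiv_apply (𝕜 := ℝ) e
  refine ⟨h1, ?_⟩
  have h2 : Integrable f := hf.continuous.integrable_of_hasCompactSupport hc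
  have := integral_mul_fderiv_eq_neg_fderiv_mul_of_integrable (μ := volume) (𝕜 := ℝ) 
    (f := fun _ : Euc N => (1:ℝ)) (g := f) (v := e) (by simp) (by simpa using h1)
    (by simpa using h2) (by fun_prop) (fun x _ => hf.differentiable (by simp) x)
  simpa using this

theorem contDiffAt_pd {N : ℕ} {x : Euc N} {u : Euc N → ℝ} (hu : ContDiffAt ℝ 2 u x) (e : Euc N) :
    ContDiffAt ℝ 1 (fun y => fderiv ℝ u y e) x :=
  (hu.fderiv_right (m := 1) (by norm_num)).clm_apply contDiffAt_const

theorem lap_continuousOn {N : ℕ} {U : Set (Euc N)} (hU : IsOpen U) {u : Euc N → ℝ}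
    (hu : ContDiffOn ℝ 2 u U) : ContinuousOn (lap N u) U := by
  intro x hx
  have h := hu.contDiffAt (hU.mem_nhds hx)
  have h2 : ContDiffAt ℝ 0 (iteratedFDeriv ℝ 2 u) x := h.iteratedFDeriv_right (by norm_num)
  apply ContinuousAt.continuousWithinAt
  unfold lap
  have h3 := h2.continuousAt
  refine tendsto_finsetSum _ (fun i _ => ?_)
  exact ((ContinuousMultilinearMap.apply ℝ (fun _ : Fin 2 => Euc N) ℝ
    ![EuclideanSpace.single i 1, EuclideanSpace.single i 1]).continuous.continuousAt).comp h3

theorem green {N : ℕ} {U K : Set (Euc N)} (hU : IsOpen U) (hK : IsCompact K) (hKU : K ⊆ U)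
    {v ψ : Euc N → ℝ} (hv : ContDiffOn ℝ 2 v U) (hψ : ContDiffOn ℝ 2 ψ U)
    (h0 : ∀ x ∈ U, x ∉ K → ψ x = 0) :
    IntegrableOn (fun x => ψ x * lap N v x) U ∧ IntegrableOn (fun x => v x * lap N ψ x) U ∧
    ∫ x in U, ψ x * lap N v x = ∫ x in U, v x * lap N ψ x := by
  classical
  have hv' : ∀ x ∈ U, ContDiffAt ℝ 2 v x := fun x hx => hv.contDiffAt (hU.mem_nhds hx)
  have hψ' : ∀ x ∈ U, ContDiffAt ℝ 2 ψ x := fun x hx => hψ.contDiffAt (hU.mem_nhds hx)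
  have hev : ∀ x ∈ U, x ∉ K → ψ =ᶠ[𝓝 x] fun _ => 0 := by
    intro x hx hxK
    filter_upwards [(hU.inter hK.isClosed.isOpen_compl).mem_nhds ⟨hx, hxK⟩] with y hy
    exact h0 y hy.1 hy.2
  have hfd : ∀ x ∈ U, x ∉ K → fderiv ℝ ψ x = 0 := by
    intro x hx hxK
    rw [(hev x hx hxK).fderiv_eq]; simp
  have hlp : ∀ x ∈ U, x ∉ K → lap N ψ x = 0 := by
    intro x hx hxK
    unfold lap
    have : iteratedFDeriv ℝ 2 ψ x = 0 := by
      rw [(hev x hx hxK).iteratedFDeriv (𝕜 := ℝ) 2 |>.self_of_nhds]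
      ext m; simp
    simp [this]
  have hmU := hU.measurableSet
  have aux : ∀ g : Euc N → ℝ, ContinuousOn g U → (∀ x ∈ U, x ∉ K → g x = 0) → IntegrableOn g U := by
    intro g hg hg0
    have h1 : IntegrableOn g K := (hg.mono hKU).integrableOn_compact hK
    have : IntegrableOn g (K ∪ (U \ K)) := by
      refine h1.union ?_
      have hz : IntegrableOn (fun _ : Euc N => (0:ℝ)) (U \ K) := integrableOn_zero
      refine hz.congr_fun ?_ (hmU.diff hK.measurableSet)
      intro x hx; simp [hg0 x hx.1 hx.2]
    apply this.mono_set
    intro x hx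
    by_cases hxK : x ∈ K <;> simp [hx, hxK]
  have i1 : IntegrableOn (fun x => ψ x * lap N v x) U :=
    aux _ (hψ.continuousOn.mul (lap_continuousOn hU hv)) (fun x hx hxK => by simp [h0 x hx hxK])
  have i2 : IntegrableOn (fun x => v x * lap N ψ x) U :=
    aux _ (hv.continuousOn.mul (lap_continuousOn hU hψ)) (fun x hx hxK => by simp [hlp x hx hxK])
  refine ⟨i1, i2, ?_⟩
  set f : Fin N → Euc N → ℝ := fun i =>
    U.indicator (fun x => ψ x * pd N v x i - v x * pd N ψ x i) with hf
  have f0 : ∀ i, ∀ x, x ∉ K → f i x = 0 := by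
    intro i x hxK
    by_cases hx : x ∈ U
    · simp [hf, hx, h0 x hx hxK, pd, hfd x hx hxK]
    · simp [hf, hx]
  have fU : ∀ i, ∀ x ∈ U, f i =ᶠ[𝓝 x] (fun x => ψ x * pd N v x i - v x * pd N ψ x i) := by
    intro i x hx
    filter_upwards [hU.mem_nhds hx] with y hy
    simp [hf, hy]
  have fK : ∀ i, ∀ x, x ∉ K → f i =ᶠ[𝓝 x] fun _ => 0 := by
    intro i x hx
    filter_upwards [hK.isClosed.isOpen_compl.mem_nhds hx] with y hy
    exact f0 i y hy
  have fc : ∀ i, ContDiff ℝ 1 (f i) := by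
    intro i
    rw [contDiff_iff_contDiffAt]
    intro x
    by_cases hx : x ∈ U
    · refine ContDiffAt.congr_of_eventuallyEq ?_ (fU i x hx)
      exact (((hψ' x hx).of_le (by norm_num)).mul (contDiffAt_pd (hv' x hx) _)).sub
        (((hv' x hx).of_le (by norm_num)).mul (contDiffAt_pd (hψ' x hx) _))
    · exact contDiffAt_const.congr_of_eventuallyEq (fK i x (fun h => hx (hKU h)))
  have fcs : ∀ i, HasCompactSupport (f i) := fun i => HasCompactSupport.intro hK (fun x hx => f0 i x hx)
  have hfi := fun i => integral_fderiv_zero (fc i) (fcs i) (EuclideanSpace.single i 1)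
  have hd : ∀ i, (fun x => fderiv ℝ (f i) x (EuclideanSpace.single i 1)) =
      U.indicator (fun x => ψ x * pd2 N v x i - v x * pd2 N ψ x i) := by
    intro i
    funext x
    by_cases hx : x ∈ U
    · rw [(fU i x hx).fderiv_eq]
      simp only [hx, indicator_of_mem]
      have e1 := ((hψ' x hx).differentiableAt (by simp)).hasFDerivAt
      have e2 := ((hv' x hx).differentiableAt (by simp)).hasFDerivAt
      have e3 := ((contDiffAt_pd (hv' x hx) (EuclideanSpace.single i 1)).differentiableAt
        (by simp)).hasFDerivAt
      have e4 := ((contDiffAt_pd (hψ' x hx) (EuclideanSpace.single i 1)).differentiableAt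
        (by simp)).hasFDerivAt
      have e5 := ((e1.mul e3).sub (e2.mul e4)).fderiv
      have p2 : ∀ u : Euc N → ℝ, ContDiffAt ℝ 2 u x → pd2 N u x i =
          fderiv ℝ (fun y => fderiv ℝ u y (EuclideanSpace.single i 1)) x
            (EuclideanSpace.single i 1) := by
        intro u hu
        unfold pd2
        rw [iteratedFDeriv_two_apply]
        have : DifferentiableAt ℝ (fderiv ℝ u) x :=
          (hu.fderiv_right (m := 1) (by norm_num)).differentiableAt (by simp)
        rw [fderiv_clm_apply this (by fun_prop)]
        simp
      rw [p2 v (hv' x hx), p2 ψ (hψ' x hx)]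
      have e6 := congrArg (fun l => l (EuclideanSpace.single i (1:ℝ))) e5
      refine Eq.trans e6 ?_
      simp
      ring
    · rw [(fK i x (fun h => hx (hKU h))).fderiv_eq]
      simp [hx]
  have hs : ∫ x, ∑ i, fderiv ℝ (f i) x (EuclideanSpace.single i 1) = 0 := by
    rw [integral_finsetSum _ (fun i _ => (hfi i).1)]
    exact Finset.sum_eq_zero (fun i _ => (hfi i).2)
  have hs2 : (fun x => ∑ i, fderiv ℝ (f i) x (EuclideanSpace.single i 1)) =
      U.indicator (fun x => ψ x * lap N v x - v x * lap N ψ x) := by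
    funext x
    have : ∀ i, fderiv ℝ (f i) x (EuclideanSpace.single i 1) = _ := fun i => congrFun (hd i) x
    rw [Finset.sum_congr rfl (fun i _ => this i)]
    by_cases hx : x ∈ U
    · simp [hx, lap, Finset.mul_sum]
    · simp [hx]
  rw [hs2, integral_indicator hmU, integral_sub i1 i2] at hs
  linarith

theorem hasDerivAt_maxpow (n : ℕ) (x : ℝ) :
    HasDerivAt (fun x : ℝ => max x 0 ^ (n + 2)) ((n + 2) * max x 0 ^ (n + 1)) x := by
  rcases lt_trichotomy x 0 with h | h | h
  · have : (fun x : ℝ => max x 0 ^ (n + 2)) =ᶠ[𝓝 x] fun _ => 0 := by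
      filter_upwards [Iio_mem_nhds h] with y hy
      rw [max_eq_right (le_of_lt hy)]; simp
    rw [max_eq_right h.le]
    exact ((hasDerivAt_const x (0:ℝ)).congr_of_eventuallyEq this).congr_deriv (by simp)
  · subst h
    have : HasFDerivAt (fun x : ℝ => max x 0 ^ (n + 2)) (0 : ℝ →L[ℝ] ℝ) (0:ℝ) := by
      refine Asymptotics.IsBigO.hasFDerivAt (n := n + 2) ?_ (by omega)
      refine Asymptotics.IsBigO.of_bound 1 ?_
      filter_upwards with y
      rw [sub_zero, one_mul, norm_pow, norm_pow, norm_norm]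
      gcongr
      rw [Real.norm_eq_abs, Real.norm_eq_abs, abs_of_nonneg (le_max_right _ _)]
      exact max_le (le_abs_self _) (abs_nonneg _)
    exact this.hasDerivAt.congr_deriv (by simp)
  · have : (fun x : ℝ => max x 0 ^ (n + 2)) =ᶠ[𝓝 x] fun y => y ^ (n + 2) := by
      filter_upwards [Ioi_mem_nhds h] with y hy
      rw [max_eq_left (le_of_lt hy)]
    rw [max_eq_left h.le]
    exact ((hasDerivAt_pow (n+2) x).congr_of_eventuallyEq this).congr_deriv (by push_cast; simp)

/-- cubic ramp -/
def c3 (x : ℝ) : ℝ := max x 0 ^ 3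

theorem c3_D2 (x : ℝ) : D2At c3 x (3 * max x 0 ^ 2) (6 * max x 0) := by
  refine ⟨fun x => 3 * max x 0 ^ 2, ?_, rfl, ?_⟩
  · filter_upwards with s
    have := hasDerivAt_maxpow 1 s
    exact this.congr_deriv (by norm_num)
  · have := (hasDerivAt_maxpow 0 x).const_mul 3
    exact this.congr_deriv (by norm_num; ring)

theorem c3_contDiff : ContDiff ℝ 2 c3 := by
  have h1 : deriv c3 = fun x => 3 * max x 0 ^ 2 := by
    funext x
    exact ((hasDerivAt_maxpow 1 x).congr_deriv (by norm_num)).deriv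
  have h2 : deriv (deriv c3) = fun x => 6 * max x 0 := by
    funext x
    rw [h1]
    exact (((hasDerivAt_maxpow 0 x).const_mul 3).congr_deriv (by norm_num; ring)).deriv
  have h0 : Differentiable ℝ c3 := fun x =>
    ((hasDerivAt_maxpow 1 x)).differentiableAt
  rw [show (2 : WithTop ℕ∞) = 1 + 1 by norm_num, contDiff_succ_iff_deriv]
  refine ⟨h0, by simp, ?_⟩
  rw [contDiff_one_iff_deriv]
  refine ⟨?_, ?_⟩
  · rw [h1]
    intro x
    exact ((hasDerivAt_maxpow 0 x).const_mul 3).differentiableAt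
  · rw [h2]; fun_prop

/-- convex truncation -/
def hc (ε t : ℝ) : ℝ := t * c3 (1 - ε / t)

theorem hc_contDiffAt (ε : ℝ) {t : ℝ} (ht : 0 < t) : ContDiffAt ℝ 2 (hc ε) t := by
  unfold hc
  apply contDiffAt_id.mul
  exact c3_contDiff.contDiffAt.comp t
    (contDiffAt_const.sub (contDiffAt_const.div contDiffAt_id ht.ne'))

theorem hc_D2 (ε : ℝ) {t : ℝ} (ht : 0 < t) : D2At (hc ε) t
    (max (1 - ε / t) 0 ^ 3 + 3 * max (1 - ε / t) 0 ^ 2 * (ε / t))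
    (6 * max (1 - ε / t) 0 * (ε ^ 2 / t ^ 3)) := by
  have h1 : D2At (fun t => 1 - ε / t) t (ε / t ^ 2) (-2 * ε / t ^ 3) := by
    refine ⟨fun t => ε / t ^ 2, ?_, rfl, ?_⟩
    · filter_upwards [isOpen_ne.mem_nhds ht.ne'] with s hs
      have := ((hasDerivAt_inv hs).const_mul ε).const_sub 1
      refine (this.congr_deriv (by ring)).congr_of_eventuallyEq ?_
      filter_upwards with y
      ring
    · have := ((hasDerivAt_pow 2 t).inv (by positivity)).const_mul ε
      refine (this.congr_deriv (by push_cast; field_simp)).congr_of_eventuallyEq ?_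
      filter_upwards with y
      simp [div_eq_mul_inv]
  have h2 : D2At (fun t : ℝ => t) t 1 0 :=
    ⟨fun _ => 1, by filter_upwards with s using hasDerivAt_id s, rfl, hasDerivAt_const _ _⟩
  have h3 := h2.mul (D2At.comp (g := fun t => 1 - ε / t) (c3_D2 _) h1)
  unfold hc
  convert h3 using 1
  · simp only [c3]; field_simp
  · simp only [c3]; field_simp; ring

theorem hc_nonneg (ε : ℝ) {t : ℝ} (ht : 0 ≤ t) : 0 ≤ hc ε t := by
  unfold hc c3; positivity

theorem hc_le {ε t : ℝ} (hε : 0 ≤ ε) (ht : 0 < t) : hc ε t ≤ t := by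
  unfold hc c3
  have : max (1 - ε / t) 0 ≤ 1 := max_le (by have : 0 ≤ ε / t := by positivity
                                             linarith) zero_le_one
  have := pow_le_one₀ (n := 3) (le_max_right (1 - ε/t) 0) this
  nlinarith

theorem le_hc {ε t : ℝ} (hε : 0 ≤ ε) (ht : 0 < t) : t - 3 * ε ≤ hc ε t := by
  unfold hc c3
  have hy : 0 ≤ ε / t := by positivity
  have he : ε = t * (ε / t) := by field_simp
  set y := ε / t
  rcases le_total y 1 with h | h
  · rw [max_eq_left (by linarith)]
    rw [he]
    have : 1 - 3 * y ≤ (1 - y) ^ 3 := by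
      have : 0 ≤ y ^ 2 * (3 - y) := by
        apply mul_nonneg (sq_nonneg _); linarith
      nlinarith
    nlinarith
  · rw [max_eq_right (by linarith)]
    rw [he]; nlinarith

theorem hc_zero {ε t : ℝ} (ht : 0 < t) (h : t ≤ ε) : hc ε t = 0 := by
  unfold hc c3
  have : 1 ≤ ε / t := by rwa [le_div_iff₀ ht, one_mul]
  rw [max_eq_right (by linarith)]
  simp

theorem isOpen_coneGT {N : ℕ} {Ω : Set (Euc N)} (hΩ : IsConeDomain N Ω) {ρ : ℝ} (hρ : 0 < ρ) :
    IsOpen (coneGT N ρ Ω) := by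
  obtain ⟨h1, -, h3⟩ := hΩ
  obtain ⟨O, hO, hO2⟩ := isOpen_induced_iff.1 h3
  have hS : IsOpen {x : Euc N | ρ < ‖x‖} := isOpen_lt continuous_const continuous_norm
  have hc : ContinuousOn (fun x : Euc N => ‖x‖⁻¹ • x) {x : Euc N | ρ < ‖x‖} := by
    refine ContinuousOn.smul (ContinuousOn.inv₀ continuous_norm.continuousOn ?_) continuousOn_id
    intro x hx
    exact (hρ.trans hx).ne'
  have : coneGT N ρ Ω = {x : Euc N | ρ < ‖x‖} ∩ (fun x : Euc N => ‖x‖⁻¹ • x) ⁻¹' O := by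
    ext x
    simp only [coneGT, mem_ofPred_eq, mem_inter_iff, mem_preimage]
    refine and_congr_right (fun hx => ?_)
    have hn : ‖x‖ ≠ 0 := (hρ.trans hx).ne'
    have hs : ‖x‖⁻¹ • x ∈ Metric.sphere (0 : Euc N) 1 := by
      simp [norm_smul, hn]
    have := Set.ext_iff.1 hO2 ⟨_, hs⟩
    simpa using this.symm
  rw [this]
  exact hc.isOpen_inter_preimage hS hO

/-- The homogeneous extension -/
abbrev PhiExt (N : ℕ) (φ : Euc N → ℝ) : Euc N → ℝ := fun x => φ (‖x‖⁻¹ • x)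

section
variable {N : ℕ} {Ω : Set (Euc N)} {lam1 : ℝ} {φ : Euc N → ℝ} {ρ : ℝ}

theorem cone_ne (hρ : 0 < ρ) {x : Euc N} (hx : x ∈ coneGT N ρ Ω) : x ≠ 0 := by
  rintro rfl
  have := hx.1
  simp at this
  linarith

theorem coneGT_sub (hρ : 0 < ρ) : coneGT N ρ Ω ⊆ cone N Ω := fun _ hx => ⟨cone_ne hρ hx, hx.2⟩

theorem phi_pos (hphi : DirichletEigenpair N Ω lam1 φ) {x : Euc N} (hx : x ∈ coneGT N ρ Ω) :
    0 < PhiExt N φ x := hphi.pos _ hx.2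

theorem phi_le (hphi : DirichletEigenpair N Ω lam1 φ) {x : Euc N} (hx : x ∈ coneGT N ρ Ω) :
    PhiExt N φ x ≤ 1 := hphi.le_one _ (subset_closure hx.2)

theorem phi_c2 (hphi : DirichletEigenpair N Ω lam1 φ) (hρ : 0 < ρ) :
    ContDiffOn ℝ 2 (PhiExt N φ) (coneGT N ρ Ω) := hphi.smoothExt.mono (coneGT_sub hρ)

theorem phi_hom (hΩ : IsConeDomain N Ω) (hphi : DirichletEigenpair N Ω lam1 φ) (hρ : 0 < ρ)
    {x : Euc N} (hx : x ∈ coneGT N ρ Ω) : fderiv ℝ (PhiExt N φ) x x = 0 := by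
  have h := ((phi_c2 hphi hρ).contDiffAt ((isOpen_coneGT hΩ hρ).mem_nhds hx))
  have h1 := (D2At.line h x)
  have h2 : D2At (fun _ : ℝ => PhiExt N φ x) 0 0 0 :=
    ⟨fun _ => 0, by filter_upwards with s using hasDerivAt_const _ _, rfl, hasDerivAt_const _ _⟩
  have h3 := h2.congr (k := fun t : ℝ => PhiExt N φ (x + t • x)) (by
    filter_upwards [Ioi_mem_nhds (show (-1:ℝ) < 0 by norm_num)] with t ht
    have h1t : 0 < 1 + t := by have : -1 < t := ht
                               linarith
    have : x + t • x = (1 + t) • x := by rw [add_smul, one_smul]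
    simp only [PhiExt]
    rw [this, norm_smul, Real.norm_of_nonneg h1t.le, smul_smul]
    congr 2
    field_simp)
  exact (h1.unique h3).1

theorem isCompact_sub (hphi : DirichletEigenpair N Ω lam1 φ) (hΩ : IsConeDomain N Ω)
    {ε : ℝ} (hε : 0 < ε) (hρ : 0 < ρ) {a b : ℝ} (ha : Real.log ρ < a) :
    ∃ K : Set (Euc N), IsCompact K ∧ K ⊆ coneGT N ρ Ω ∧
      ∀ x ∈ coneGT N ρ Ω, ε ≤ PhiExt N φ x → Real.log ‖x‖ ∈ Icc a b → x ∈ K := by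
  have hcl : closure Ω ⊆ Metric.sphere (0 : Euc N) 1 :=
    closure_minimal hΩ.1 Metric.isClosed_sphere
  have hcc : IsCompact (closure Ω) :=
    (isCompact_sphere (0 : Euc N) 1).of_isClosed_subset isClosed_closure hcl
  have hK1 : IsCompact (closure Ω ∩ φ ⁻¹' Ici ε) :=
    hcc.of_isClosed_subset (hphi.contOn.preimage_isClosed_of_isClosed isClosed_closure isClosed_Ici)
      inter_subset_left
  have hK1s : closure Ω ∩ φ ⁻¹' Ici ε ⊆ Ω := by
    rintro ω ⟨h1, h2⟩
    by_contra h
    have := hphi.bdryZero ω ⟨h1, h⟩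
    have h2' : ε ≤ φ ω := h2
    linarith
  refine ⟨(fun z : ℝ × Euc N => Real.exp z.1 • z.2) '' (Icc a b ×ˢ (closure Ω ∩ φ ⁻¹' Ici ε)),
    (isCompact_Icc.prod hK1).image (by fun_prop), ?_, ?_⟩
  · rintro _ ⟨⟨s, ω⟩, ⟨hs, hω⟩, rfl⟩
    have h1 : ‖ω‖ = 1 := by simpa using hcl hω.1
    simp only [coneGT, mem_ofPred_eq, norm_smul, h1, mul_one, Real.norm_eq_abs, Real.abs_exp, smul_smul]
    constructor
    · rw [← Real.log_lt_iff_lt_exp hρ]; exact ha.trans_le hs.1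
    · rw [inv_mul_cancel₀ (Real.exp_ne_zero _), one_smul]; exact hK1s hω
  · intro x hx h1 h2
    have hn : 0 < ‖x‖ := hρ.trans hx.1
    refine ⟨(Real.log ‖x‖, ‖x‖⁻¹ • x), ⟨h2, subset_closure hx.2, h1⟩, ?_⟩
    simp only [Real.exp_log hn, smul_smul]
    rw [mul_inv_cancel₀ hn.ne', one_smul]

theorem logn_continuousOn (hρ : 0 < ρ) {η : ℝ → ℝ} (hη : Continuous η) :
    ContinuousOn (fun x : Euc N => η (Real.log ‖x‖)) (coneGT N ρ Ω) := by
  apply hη.comp_continuousOn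
  apply ContinuousOn.log continuous_norm.continuousOn
  intro x hx
  simpa using cone_ne hρ hx

theorem int_lem (hΩ : IsConeDomain N Ω) (hρ : 0 < ρ) {η : ℝ → ℝ} (hη : Continuous η) {a b : ℝ}
    (hsupp : ∀ s, s ∉ Icc a b → η s = 0) {g : Euc N → ℝ} (hg : ContinuousOn g (coneGT N ρ Ω))
    {C : ℝ} (hgC : ∀ x ∈ coneGT N ρ Ω, |g x| ≤ C) :
    IntegrableOn (fun x => η (Real.log ‖x‖) * g x) (coneGT N ρ Ω) := by
  have hU := isOpen_coneGT hΩ hρ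
  obtain ⟨M, hM⟩ := isCompact_Icc.exists_bound_of_continuousOn (hη.continuousOn (s := Icc a b))
  have hb : IntegrableOn (fun x : Euc N => (Metric.closedBall (0 : Euc N) (Real.exp b)).indicator
      (fun _ => |M| * C) x) (coneGT N ρ Ω) := by
    apply Integrable.integrableOn
    rw [integrable_indicator_iff measurableSet_closedBall]
    exact integrableOn_const (measure_closedBall_lt_top.ne)
  refine Integrable.mono' hb ?_ ?_
  · exact ((logn_continuousOn hρ hη).mul hg).aestronglyMeasurable hU.measurableSet
  · refine (ae_restrict_iff' hU.measurableSet).2 (Eventually.of_forall fun x hx => ?_)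
    have hn : 0 < ‖x‖ := hρ.trans hx.1
    by_cases hs : Real.log ‖x‖ ∈ Icc a b
    · have : x ∈ Metric.closedBall (0 : Euc N) (Real.exp b) := by
        simp only [Metric.mem_closedBall, dist_zero_right]
        exact (Real.log_le_iff_le_exp hn).1 hs.2
      rw [indicator_of_mem this, norm_mul]
      exact mul_le_mul ((hM _ hs).trans (le_abs_self _)) (hgC x hx) (norm_nonneg _) (abs_nonneg _)
    · rw [hsupp _ hs]
      simp only [zero_mul, norm_zero]
      by_cases hx2 : x ∈ Metric.closedBall (0 : Euc N) (Real.exp b)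
      · rw [indicator_of_mem hx2]
        exact mul_nonneg (abs_nonneg _) ((abs_nonneg _).trans (hgC x hx))
      · rw [indicator_of_notMem hx2]

end

theorem rpow_neg_two {r : ℝ} (hr : 0 < r) : r ^ (-(2:ℝ)) = Real.exp (-2 * Real.log r) := by
  rw [Real.rpow_def_of_pos hr]; ring_nf

theorem inv_sq_exp {r : ℝ} (hr : 0 < r) : (r ^ 2)⁻¹ = Real.exp (-2 * Real.log r) := by
  rw [← rpow_neg_two hr, Real.rpow_neg hr.le]; norm_num

theorem integral_combo {X : Type*} [MeasurableSpace X] {m : Measure X} {f g h : X → ℝ}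
    (hf : Integrable f m) (hg : Integrable g m) (hh : Integrable h m) (c d : ℝ) :
    Integrable (fun x => -(c * f x) - g x + d * h x) m ∧
    ∫ x, (-(c * f x) - g x + d * h x) ∂m = -(c * ∫ x, f x ∂m) - ∫ x, g x ∂m + d * ∫ x, h x ∂m := by
  have h1 : Integrable (fun x => -(c * f x)) m := (hf.const_mul c).neg
  have h2 : Integrable (fun x => -(c * f x) - g x) m := h1.sub hg
  refine ⟨h2.add (hh.const_mul d), ?_⟩
  rw [integral_add h2 (hh.const_mul d), integral_sub h1 hg, integral_neg, integral_const_mul,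
    integral_const_mul]

theorem le_of_eps {a b c : ℝ} (h : ∀ ε : ℝ, 0 < ε → a ≤ b + 3 * ε * c) : a ≤ b := by
  have h2 : Filter.Tendsto (fun ε : ℝ => b + 3 * ε * c) (𝓝[>] 0) (𝓝 (b + 3 * 0 * c)) := by
    apply Filter.Tendsto.mono_left _ nhdsWithin_le_nhds
    apply Continuous.tendsto
    fun_prop
  have h3 := ge_of_tendsto h2 (by filter_upwards [self_mem_nhdsWithin] with ε hε using h ε hε)
  simpa using h3

theorem D2_exp_mul {γ s t1 t2 : ℝ} {θ : ℝ → ℝ} (h : D2At θ s t1 t2) :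
    D2At (fun l => Real.exp (γ * l) * θ l) s (Real.exp (γ * s) * (γ * θ s + t1))
      (Real.exp (γ * s) * (γ ^ 2 * θ s + 2 * γ * t1 + t2)) := by
  have h1 : D2At (fun l => Real.exp (γ * l)) s (γ * Real.exp (γ * s)) (γ ^ 2 * Real.exp (γ * s)) := by
    have h0 : ∀ s, HasDerivAt (fun l => Real.exp (γ * l)) (γ * Real.exp (γ * s)) s := fun s =>
      (((hasDerivAt_id s).const_mul γ).exp).congr_deriv (by simp; ring)
    refine ⟨fun l => γ * Real.exp (γ * l), Eventually.of_forall h0, rfl, ?_⟩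
    exact ((h0 s).const_mul γ).congr_deriv (by ring)
  convert h1.mul h using 1 <;> ring

section
variable {N : ℕ} {Ω : Set (Euc N)} {lam1 : ℝ} {φ : Euc N → ℝ} {ρ : ℝ}

theorem psi_c2 (hphi : DirichletEigenpair N Ω lam1 φ) (hρ : 0 < ρ) (γ : ℝ) {θ K : ℝ → ℝ}
    (hθ : ContDiff ℝ 2 θ) (hK : ∀ t, 0 < t → ContDiffAt ℝ 2 K t) :
    ContDiffOn ℝ 2 (fun y => (fun l => Real.exp (γ * l) * θ l) (Real.log ‖y‖) * K (PhiExt N φ y))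
      (coneGT N ρ Ω) := by
  have h1 : ContDiffOn ℝ 2 (fun y : Euc N => Real.log ‖y‖) (coneGT N ρ Ω) := by
    intro x hx
    have hx0 := cone_ne hρ hx
    exact ((contDiffAt_norm ℝ hx0).log (by simpa using hx0)).contDiffWithinAt
  have h2 : ContDiff ℝ 2 (fun l => Real.exp (γ * l) * θ l) := by fun_prop
  refine (h2.comp_contDiffOn h1).mul ?_
  intro x hx
  exact (hK _ (phi_pos hphi hx)).comp_contDiffWithinAt x (phi_c2 hphi hρ x hx)

theorem test_ineq (hΩ : IsConeDomain N Ω) (hphi : DirichletEigenpair N Ω lam1 φ)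
    {μ γ γ' c0 : ℝ} (hρ : 0 < ρ) (hγ : γ + γ' = 2 - N) (hγ' : γ' * (γ' + N - 2) = lam1 - μ)
    (hc0 : 0 ≤ c0) {v Y : Euc N → ℝ} (hv : ContDiffOn ℝ 2 v (coneGT N ρ Ω))
    (hv0 : ∀ x ∈ coneGT N ρ Ω, 0 ≤ v x)
    (hv1 : ∀ x ∈ coneGT N ρ Ω, v x ≤ Real.exp (γ * Real.log ‖x‖))
    (hY : ContinuousOn Y (coneGT N ρ Ω)) (hY0 : ∀ x ∈ coneGT N ρ Ω, 0 ≤ Y x)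
    (hY1 : ∀ x ∈ coneGT N ρ Ω, Y x ≤ 1)
    (hL : ∀ x ∈ coneGT N ρ Ω, c0 * Real.exp ((γ - 2) * Real.log ‖x‖) * Y x ≤
      -lap N v x - μ * ‖x‖ ^ (-(2:ℝ)) * v x)
    {θ : ℝ → ℝ} (hθ : ContDiff ℝ 2 θ) (hθ0 : ∀ s, 0 ≤ θ s) {a b : ℝ} (ha : Real.log ρ < a)
    (hsupp : ∀ s, s ∉ Icc a b → θ s = 0) :
    c0 * ∫ x in coneGT N ρ Ω, θ (Real.log ‖x‖) * Real.exp (-N * Real.log ‖x‖) *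
        (PhiExt N φ x * Y x) ≤
      -∫ x in coneGT N ρ Ω, (deriv (deriv θ) (Real.log ‖x‖) +
        (γ' - γ) * deriv θ (Real.log ‖x‖)) * Real.exp (-N * Real.log ‖x‖) *
        (PhiExt N φ x * (v x * Real.exp (-γ * Real.log ‖x‖))) := by
  have hU := isOpen_coneGT hΩ hρ
  set U := coneGT N ρ Ω with hUdef
  have hd1 : Continuous (deriv θ) := hθ.continuous_deriv (by norm_num)
  have hd2 : Continuous (deriv (deriv θ)) := by
    have : ContDiff ℝ 1 (deriv θ) := by
      rw [show (2 : WithTop ℕ∞) = 1 + 1 by norm_num, contDiff_succ_iff_deriv] at hθ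
      exact hθ.2.2
    exact this.continuous_deriv (by norm_num)
  have hs0 : ∀ s, s ∉ Icc a b → θ =ᶠ[𝓝 s] fun _ => 0 := by
    intro s hs
    filter_upwards [isClosed_Icc.isOpen_compl.mem_nhds hs] with y hy using hsupp y hy
  have hs1 : ∀ s, s ∉ Icc a b → deriv θ s = 0 := by
    intro s hs
    rw [(hs0 s hs).deriv_eq]; simp
  have hs2 : ∀ s, s ∉ Icc a b → deriv (deriv θ) s = 0 := by
    intro s hs
    have : deriv θ =ᶠ[𝓝 s] fun _ => 0 := by
      filter_upwards [isClosed_Icc.isOpen_compl.mem_nhds hs] with y hy using hs1 y hy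
    rw [this.deriv_eq]; simp
  have hΦc : ContinuousOn (PhiExt N φ) U := (phi_c2 hphi hρ).continuousOn
  set Z : Euc N → ℝ := fun x => v x * Real.exp (-γ * Real.log ‖x‖) with hZ
  have hZc : ContinuousOn Z U := hv.continuousOn.mul
    (logn_continuousOn hρ (η := fun s => Real.exp (-γ * s)) (by fun_prop))
  have hZ0 : ∀ x ∈ U, 0 ≤ Z x := fun x hx => mul_nonneg (hv0 x hx) (Real.exp_nonneg _)
  have hZ1 : ∀ x ∈ U, Z x ≤ 1 := fun x hx => by
    have := mul_le_mul_of_nonneg_right (hv1 x hx) (Real.exp_nonneg (-γ * Real.log ‖x‖))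
    rw [← Real.exp_add] at this
    refine this.trans (le_of_eq ?_)
    simp
  set A : ℝ → ℝ := fun s => deriv (deriv θ) s + (γ' - γ) * deriv θ s with hA
  have hAc : Continuous A := by fun_prop
  -- integrability of the three pieces
  have I1 : IntegrableOn (fun x => θ (Real.log ‖x‖) * Real.exp (-N * Real.log ‖x‖) *
        (PhiExt N φ x * Y x)) U := by
    refine int_lem hΩ hρ (η := fun s => θ s * Real.exp (-N * s)) (a := a) (b := b)
      (by have := hθ.continuous; fun_prop)
      (fun s hs => by simp [hsupp s hs]) (hΦc.mul hY) (C := 1) (fun x hx => ?_)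
    rw [abs_of_nonneg (mul_nonneg (phi_pos hphi hx).le (hY0 x hx))]
    exact mul_le_one₀ (phi_le hphi hx) (hY0 x hx) (hY1 x hx)
  have I2 : IntegrableOn (fun x => A (Real.log ‖x‖) * Real.exp (-N * Real.log ‖x‖) *
        (PhiExt N φ x * Z x)) U := by
    refine int_lem hΩ hρ (η := fun s => A s * Real.exp (-N * s)) (a := a) (b := b) (by fun_prop)
      (fun s hs => by simp [hA, hs1 s hs, hs2 s hs]) (hΦc.mul hZc) (C := 1) (fun x hx => ?_)
    rw [abs_of_nonneg (mul_nonneg (phi_pos hphi hx).le (hZ0 x hx))]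
    exact mul_le_one₀ (phi_le hphi hx) (hZ0 x hx) (hZ1 x hx)
  have I3 : IntegrableOn (fun x => (c0 * θ (Real.log ‖x‖) + |A (Real.log ‖x‖)| +
      |lam1| * θ (Real.log ‖x‖)) * Real.exp (-N * Real.log ‖x‖)) U := by
    have := int_lem hΩ hρ (η := fun s => (c0 * θ s + |A s| + |lam1| * θ s) * Real.exp (-N * s))
      (a := a) (b := b) (by have := hθ.continuous; fun_prop)
      (fun s hs => by simp [hA, hs1 s hs, hs2 s hs, hsupp s hs])
      (g := fun _ => 1) continuousOn_const (C := 1) (fun x hx => by simp)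
    simpa using this
  have main : ∀ ε : ℝ, 0 < ε → 
      c0 * (∫ x in U, θ (Real.log ‖x‖) * Real.exp (-N * Real.log ‖x‖) * (PhiExt N φ x * Y x)) ≤
      -(∫ x in U, A (Real.log ‖x‖) * Real.exp (-N * Real.log ‖x‖) * (PhiExt N φ x * Z x)) +
      3 * ε * ∫ x in U, (c0 * θ (Real.log ‖x‖) + |A (Real.log ‖x‖)| +
      |lam1| * θ (Real.log ‖x‖)) * Real.exp (-N * Real.log ‖x‖) := by
    intro ε hε
    obtain ⟨K, hK, hKU, hKm⟩ := isCompact_sub (b := b) hphi hΩ hε hρ ha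
    set ψ : Euc N → ℝ := fun y =>
      (fun l => Real.exp (γ' * l) * θ l) (Real.log ‖y‖) * hc ε (PhiExt N φ y) with hψ
    have hψc : ContDiffOn ℝ 2 ψ U := psi_c2 hphi hρ γ' hθ (fun t ht => hc_contDiffAt ε ht)
    have hψ0 : ∀ x ∈ U, x ∉ K → ψ x = 0 := by
      intro x hx hxK
      by_cases h1 : ε ≤ PhiExt N φ x
      · have : Real.log ‖x‖ ∉ Icc a b := fun h => hxK (hKm x hx h1 h)
        simp [hψ, hsupp _ this]
      · simp only [hψ]
        rw [hc_zero (phi_pos hphi hx) (le_of_not_ge h1), mul_zero]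
    obtain ⟨g1, g2, g3⟩ := green hU hK hKU hv hψc hψ0
    have hpt : ∀ x ∈ U, ψ x * lap N v x - v x * lap N ψ x ≤
        -(c0 * (θ (Real.log ‖x‖) * Real.exp (-N * Real.log ‖x‖) * (PhiExt N φ x * Y x)))
        - A (Real.log ‖x‖) * Real.exp (-N * Real.log ‖x‖) * (PhiExt N φ x * Z x) +
        3 * ε * ((c0 * θ (Real.log ‖x‖) + |A (Real.log ‖x‖)| +
          |lam1| * θ (Real.log ‖x‖)) * Real.exp (-N * Real.log ‖x‖)) := by
      intro x hx
      have hx0 := cone_ne hρ hx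
      have hn : 0 < ‖x‖ := by simpa using hx0
      have hlap := lap_radial_mul hx0 (D2_exp_mul (γ := γ')
        (D2At.of_contDiffAt (hθ.contDiffAt (x := Real.log ‖x‖)))) (hc_D2 ε (phi_pos hphi hx))
        ((phi_c2 hphi hρ).contDiffAt (hU.mem_nhds hx)) (phi_hom hΩ hphi hρ hx)
        (hψc.contDiffAt (hU.mem_nhds hx))
      have heig := hphi.eigen x (coneGT_sub hρ hx)
      change lap N (PhiExt N φ) x = -lam1 * ‖x‖ ^ (-(2:ℝ)) * PhiExt N φ x at heig
      rw [heig] at hlap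
      have hLx := hL x hx
      have hΦ0 := phi_pos hphi hx
      have hΦ1 := phi_le hphi hx
      have hh0 := hc_nonneg ε hΦ0.le
      have hh1 := hc_le hε.le hΦ0
      have hh2 := le_hc hε.le hΦ0
      have hhd : hc ε (PhiExt N φ x) - (max (1 - ε / PhiExt N φ x) 0 ^ 3 + 3 *
          max (1 - ε / PhiExt N φ x) 0 ^ 2 * (ε / PhiExt N φ x)) * PhiExt N φ x =
          - (3 * ε * max (1 - ε / PhiExt N φ x) 0 ^ 2) := by
        unfold hc c3; field_simp; ring
      have hP0 : 0 ≤ max (1 - ε / PhiExt N φ x) 0 := le_max_right _ _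
      have hP1 : max (1 - ε / PhiExt N φ x) 0 ≤ 1 :=
        max_le (by have : 0 ≤ ε / PhiExt N φ x := by positivity
                   linarith) zero_le_one
      have hS : 0 ≤ ∑ i, pd N (PhiExt N φ) x i ^ 2 := Finset.sum_nonneg (fun i _ => sq_nonneg _)
      have hK2 : 0 ≤ 6 * max (1 - ε / PhiExt N φ x) 0 * (ε ^ 2 / PhiExt N φ x ^ 3) := by positivity
      have hz0 := hZ0 x hx
      have hz1 := hZ1 x hx
      have hy0 := hY0 x hx
      have hy1 := hY1 x hx
      have ht0 := hθ0 (Real.log ‖x‖)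
      have hvz : v x = Z x * Real.exp (γ * Real.log ‖x‖) := by
        simp only [hZ]
        rw [mul_assoc, ← Real.exp_add]; simp
      have hAx : A (Real.log ‖x‖) = deriv (deriv θ) (Real.log ‖x‖) +
        (γ' - γ) * deriv θ (Real.log ‖x‖) := rfl
      have hvx0 := hv0 x hx
      have hψx : ψ x = Real.exp (γ' * Real.log ‖x‖) * θ (Real.log ‖x‖) * hc ε (PhiExt N φ x) := rfl
      rw [rpow_neg_two hn] at hLx hlap
      rw [div_eq_mul_inv, inv_sq_exp hn] at hlap
      rw [hψx]
      change lap N ψ x = _ at hlap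
      generalize lap N ψ x = Lψ at *
      generalize lap N v x = Lv at *
      generalize Real.log ‖x‖ = l at *
      have ex1 : Real.exp (γ' * l) * Real.exp ((γ - 2) * l) = Real.exp (-N * l) := by
        rw [← Real.exp_add]; congr 1
        have : γ = 2 - N - γ' := by linarith
        rw [this]; ring
      have ex2 : Real.exp (γ * l) * Real.exp (γ' * l) * Real.exp (-2 * l) = Real.exp (-N * l) := by
        rw [← Real.exp_add, ← Real.exp_add]; congr 1
        have : γ = 2 - N - γ' := by linarith
        rw [this]; ring
      generalize PhiExt N φ x = P at *
      generalize hc ε P = h at *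
      generalize (∑ i, pd N (PhiExt N φ) x i ^ 2) = S at *
      generalize 6 * max (1 - ε / P) 0 * (ε ^ 2 / P ^ 3) = K2 at *
      generalize hK1 : max (1 - ε / P) 0 ^ 3 + 3 * max (1 - ε / P) 0 ^ 2 * (ε / P) = K1 at *
      generalize max (1 - ε / P) 0 = m at *
      generalize hvx : v x = vx at *
      generalize Y x = y at *
      generalize Z x = z at *
      generalize θ l = t at *
      generalize A l = Al at *
      generalize deriv θ l = t1 at *
      generalize deriv (deriv θ) l = t2 at *
      have hE : 0 < Real.exp (-N * l) := Real.exp_pos _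
      have he' : 0 < Real.exp (γ' * l) := Real.exp_pos _
      -- first part
      have b1 : Real.exp (γ' * l) * t * h * Lv ≤ 
          -(c0 * (t * Real.exp (-N * l) * (h * y))) -
            Real.exp (γ' * l) * t * h * (μ * Real.exp (-2 * l) * vx) := by
        have := mul_le_mul_of_nonneg_left hLx (mul_nonneg (mul_nonneg he'.le ht0) hh0)
        rw [← ex1]
        linarith
      have b2 : vx * Lψ = Real.exp (-N * l) * z * (h * (Al + (lam1 - μ) * t) - lam1 * t * (K1 * P))
          + vx * (Real.exp (γ' * l) * t * (K2 * S)) := by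
        have : (Real.exp (γ' * l) * (γ' ^ 2 * t + 2 * γ' * t1 + t2) +
            (N - 2) * (Real.exp (γ' * l) * (γ' * t + t1))) =
            Real.exp (γ' * l) * (Al + (lam1 - μ) * t) := by
          rw [hAx, ← hγ']
          have : γ = 2 - N - γ' := by linarith
          rw [this]; ring
        rw [hlap, this, ← ex2, hvz]
        ring
      have b3 : 0 ≤ vx * (Real.exp (γ' * l) * t * (K2 * S)) := by positivity
      have b4 : Real.exp (γ' * l) * t * h * (μ * Real.exp (-2 * l) * vx) =
          Real.exp (-N * l) * z * (h * μ * t) := by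
        rw [← ex2, hvz]; ring
      have b5 : h * (Al + (lam1 - μ) * t) - lam1 * t * (K1 * P) =
          h * Al - h * μ * t - lam1 * t * (3 * ε * m ^ 2) := by
        have : lam1 * t * (h - K1 * P) = lam1 * t * (-(3 * ε * m ^ 2)) := by rw [hhd]
        linarith
      rw [b5] at b2
      have hm : m ^ 2 ≤ 1 := pow_le_one₀ hP0 hP1
      -- pointwise claims without the exponential
      have c1 : lam1 * t * (3 * ε * m ^ 2) ≤ 3 * ε * (|lam1| * t) := by
        have h1 : lam1 * t * (3 * ε * m ^ 2) ≤ |lam1| * t * (3 * ε * m ^ 2) := by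
          apply mul_le_mul_of_nonneg_right _ (by positivity)
          exact mul_le_mul_of_nonneg_right (le_abs_self _) ht0
        have h2 : |lam1| * t * (3 * ε * m ^ 2) ≤ |lam1| * t * (3 * ε * 1) := by gcongr
        linarith
      have c2 : P * Al - h * Al ≤ 3 * ε * |Al| := by
        have h1 : (P - h) * Al ≤ (P - h) * |Al| :=
          mul_le_mul_of_nonneg_left (le_abs_self _) (by linarith)
        have h2 : (P - h) * |Al| ≤ 3 * ε * |Al| :=
          mul_le_mul_of_nonneg_right (by linarith) (abs_nonneg _)
        linarith
      have c3 : z * (P * Al - h * Al + lam1 * t * (3 * ε * m ^ 2)) ≤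
          3 * ε * (|Al| + |lam1| * t) := by
        have h1 : z * (P * Al - h * Al + lam1 * t * (3 * ε * m ^ 2)) ≤
          z * (3 * ε * (|Al| + |lam1| * t)) := mul_le_mul_of_nonneg_left (by linarith) hz0
        have h2 : z * (3 * ε * (|Al| + |lam1| * t)) ≤ 1 * (3 * ε * (|Al| + |lam1| * t)) :=
          mul_le_mul_of_nonneg_right hz1 (by positivity)
        linarith
      have c4 : c0 * (t * (P * y)) - c0 * (t * (h * y)) ≤ 3 * ε * (c0 * t) := by
        have h1 : (P - h) * y ≤ 3 * ε * 1 := mul_le_mul (by linarith) hy1 hy0 (by positivity)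
        have h2 := mul_le_mul_of_nonneg_left h1 (mul_nonneg hc0 ht0)
        linarith
      have d3 := mul_le_mul_of_nonneg_left c3 hE.le
      have d4 := mul_le_mul_of_nonneg_left c4 hE.le
      linarith
    have hIntg : ∫ x in U, (ψ x * lap N v x - v x * lap N ψ x) = 0 := by
      rw [integral_sub g1 g2, g3, sub_self]
    have hc := integral_combo I1 I2 I3 c0 (3 * ε)
    have g12 : IntegrableOn (fun x => ψ x * lap N v x - v x * lap N ψ x) U := g1.sub g2
    have hle := setIntegral_mono_on g12 hc.1 hU.measurableSet hpt
    rw [hIntg, hc.2] at hle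
    linarith
  exact le_of_eps main

end

/-- fixed one-dimensional bump -/
def bmp : ContDiffBump (0:ℝ) := ⟨1/2, 1, by norm_num, by norm_num⟩

/-- fixed one-dimensional bump, as a function -/
def jj (s : ℝ) : ℝ := bmp s

theorem jj_contDiff : ContDiff ℝ 3 jj := bmp.contDiff
theorem jj_nonneg (s : ℝ) : 0 ≤ jj s := bmp.nonneg
theorem jj_le_one (s : ℝ) : jj s ≤ 1 := bmp.le_one
theorem jj_zero {s : ℝ} (h : s ∉ Icc (-1:ℝ) 1) : jj s = 0 := by
  apply bmp.zero_of_le_dist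
  simp only [bmp, dist_zero_right, Real.norm_eq_abs]
  by_contra hh
  push Not at hh
  rw [abs_lt] at hh
  exact h ⟨hh.1.le, hh.2.le⟩
theorem jj_zero_eq : jj 0 = 1 := by
  apply bmp.one_of_mem_closedBall
  simp [bmp]

theorem deriv_supp {k : ℝ → ℝ} {a b : ℝ} (h : ∀ s, s ∉ Icc a b → k s = 0) :
    ∀ s, s ∉ Icc a b → deriv k s = 0 := by
  intro s hs
  have : k =ᶠ[𝓝 s] fun _ => 0 := by
    filter_upwards [isClosed_Icc.isOpen_compl.mem_nhds hs] with y hy using h y hy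
  rw [this.deriv_eq]; simp

theorem ode_mono {m m1 m2 : ℝ → ℝ} {κ T : ℝ} (hκ : 0 ≤ κ)
    (h1 : ∀ t, HasDerivAt m (m1 t) t) (h2 : ∀ t, HasDerivAt m1 (m2 t) t) (h0 : ∀ t, 0 ≤ m t)
    (hle : ∀ t, T < t → m2 t - κ * m1 t ≤ 0) : ∀ t, T < t → 0 ≤ m1 t := by
  intro t1 ht1
  by_contra hneg
  push Not at hneg
  have hE : ∀ t, HasDerivAt (fun t => Real.exp (-κ * t) * m1 t)
      (Real.exp (-κ * t) * (m2 t - κ * m1 t)) t := fun t => by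
    have := (((hasDerivAt_id t).const_mul (-κ)).exp).mul (h2 t)
    exact this.congr_deriv (by simp; ring)
  have hanti : AntitoneOn (fun t => Real.exp (-κ * t) * m1 t) (Ici t1) := by
    apply antitoneOn_of_deriv_nonpos (convex_Ici _)
    · exact fun t _ => (hE t).continuousAt.continuousWithinAt
    · exact fun t _ => (hE t).differentiableAt.differentiableWithinAt
    · intro t ht
      rw [(hE t).deriv]
      rw [interior_Ici] at ht
      exact mul_nonpos_of_nonneg_of_nonpos (Real.exp_nonneg _) (hle t (ht1.trans ht))
  have hm1 : ∀ t, t1 ≤ t → m1 t ≤ m1 t1 := by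
    intro t ht
    have h := hanti (mem_Ici.2 le_rfl) (mem_Ici.2 ht) ht
    simp only at h
    have e : Real.exp (-κ * t1) = Real.exp (-κ * t) * Real.exp (κ * (t - t1)) := by
      rw [← Real.exp_add]; ring_nf
    rw [e, mul_assoc] at h
    have h3 := le_of_mul_le_mul_left h (Real.exp_pos _)
    have h4 : 1 ≤ Real.exp (κ * (t - t1)) := Real.one_le_exp (mul_nonneg hκ (by linarith))
    nlinarith
  have hanti2 : AntitoneOn (fun t => m t - m1 t1 * t) (Ici t1) := by
    have hd : ∀ t, HasDerivAt (fun t => m t - m1 t1 * t) (m1 t - m1 t1) t := fun t =>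
      ((h1 t).sub ((hasDerivAt_id t).const_mul (m1 t1))).congr_deriv (by simp)
    apply antitoneOn_of_deriv_nonpos (convex_Ici _)
    · exact fun t _ => (hd t).continuousAt.continuousWithinAt
    · exact fun t _ => (hd t).differentiableAt.differentiableWithinAt
    · intro t ht
      rw [(hd t).deriv]
      rw [interior_Ici] at ht
      have := hm1 t (le_of_lt ht)
      linarith
  have hs : 0 ≤ (m t1 + 1) / (-m1 t1) := div_nonneg (by linarith [h0 t1]) (by linarith)
  have := hanti2 (mem_Ici.2 le_rfl) (mem_Ici.2 (le_add_of_nonneg_right hs)) (le_add_of_nonneg_right hs)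
  simp only at this
  have e : m1 t1 * ((m t1 + 1) / (-m1 t1)) = -(m t1 + 1) := by
    have : m1 t1 ≠ 0 := hneg.ne
    field_simp
  have := h0 (t1 + (m t1 + 1) / (-m1 t1))
  nlinarith

theorem ode_false {m m1 m2 : ℝ → ℝ} {κ T c C : ℝ} (hκ : 0 ≤ κ) (hc : 0 < c)
    (h1 : ∀ t, HasDerivAt m (m1 t) t) (h2 : ∀ t, HasDerivAt m1 (m2 t) t) (h0 : ∀ t, 0 ≤ m t)
    (hC : ∀ t, m t ≤ C) (hm1 : ∀ t, T < t → 0 ≤ m1 t)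
    (hle : ∀ t, T < t → m2 t - κ * m1 t ≤ -c) : False := by
  have hd : ∀ t, HasDerivAt (fun t => m1 t - κ * m t + c * t) (m2 t - κ * m1 t + c) t := fun t =>
    (((h2 t).sub ((h1 t).const_mul κ)).add ((hasDerivAt_id t).const_mul c)).congr_deriv (by simp)
  have hanti : AntitoneOn (fun t => m1 t - κ * m t + c * t) (Ici (T + 1)) := by
    apply antitoneOn_of_deriv_nonpos (convex_Ici _)
    · exact fun t _ => (hd t).continuousAt.continuousWithinAt
    · exact fun t _ => (hd t).differentiableAt.differentiableWithinAt
    · intro t ht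
      rw [(hd t).deriv]
      rw [interior_Ici] at ht
      have ht' : T + 1 < t := ht
      have := hle t (by linarith)
      linarith
  have a1 := hm1 (T + 1) (by linarith)
  have a2 := h0 (T + 1)
  have a3 := hC (T + 1)
  set D := (κ * C + m1 (T + 1) + 1) / c with hD
  have hD0 : 0 ≤ D := div_nonneg (by nlinarith) hc.le
  have := hanti (mem_Ici.2 le_rfl) (mem_Ici.2 (le_add_of_nonneg_right hD0)) (le_add_of_nonneg_right hD0)
  simp only at this
  have e : c * D = κ * C + m1 (T + 1) + 1 := by rw [hD]; field_simp
  have b1 := hm1 (T + 1 + D) (by linarith)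
  have b2 := mul_le_mul_of_nonneg_left (hC (T + 1 + D)) hκ
  have b3 := mul_nonneg hκ a2
  nlinarith

section
variable {N : ℕ} {Ω : Set (Euc N)} {ρ : ℝ}

/-- smoothed spherical means in the logarithmic variable -/
def Sint (N : ℕ) (Ω : Set (Euc N)) (ρ : ℝ) (k : ℝ → ℝ) (g : Euc N → ℝ) (t : ℝ) : ℝ :=
  ∫ x in coneGT N ρ Ω, k (t - Real.log ‖x‖) * Real.exp (-N * Real.log ‖x‖) * g x

theorem Sint_int (hΩ : IsConeDomain N Ω) (hρ : 0 < ρ) {k : ℝ → ℝ} (hk : Continuous k)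
    (hsupp : ∀ s, s ∉ Icc (-1:ℝ) 1 → k s = 0) {g : Euc N → ℝ} (hg : ContinuousOn g (coneGT N ρ Ω))
    {C : ℝ} (hgC : ∀ x ∈ coneGT N ρ Ω, |g x| ≤ C) (t : ℝ) :
    IntegrableOn (fun x => k (t - Real.log ‖x‖) * Real.exp (-N * Real.log ‖x‖) * g x)
      (coneGT N ρ Ω) := by
  refine int_lem hΩ hρ (η := fun s => k (t - s) * Real.exp (-N * s)) (a := t - 1) (b := t + 1)
    (by fun_prop) (fun s hs => ?_) hg hgC
  rw [hsupp, zero_mul]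
  rintro ⟨h1, h2⟩
  exact hs ⟨by linarith, by linarith⟩

theorem Sint_deriv (hΩ : IsConeDomain N Ω) (hρ : 0 < ρ) {k : ℝ → ℝ} (hk : ContDiff ℝ 1 k)
    (hsupp : ∀ s, s ∉ Icc (-1:ℝ) 1 → k s = 0) {g : Euc N → ℝ} (hg : ContinuousOn g (coneGT N ρ Ω))
    {C : ℝ} (hgC : ∀ x ∈ coneGT N ρ Ω, |g x| ≤ C) (t : ℝ) :
    HasDerivAt (Sint N Ω ρ k g) (Sint N Ω ρ (deriv k) g t) t := by
  have hU := isOpen_coneGT hΩ hρ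
  have hk' : Continuous (deriv k) := hk.continuous_deriv (by norm_num)
  have hs' := deriv_supp hsupp
  obtain ⟨M, hM⟩ := isCompact_Icc.exists_bound_of_continuousOn (hk'.continuousOn (s := Icc (-1:ℝ) 1))
  have hM' : ∀ s, |deriv k s| ≤ |M| := by
    intro s
    by_cases h : s ∈ Icc (-1:ℝ) 1
    · exact (hM s h).trans (le_abs_self _)
    · rw [hs' s h]; simp
  have hb := int_lem hΩ hρ
    (η := fun s => (|M| * max 0 (min 1 (3 - |s - t|))) * Real.exp (-N * s)) (a := t - 3) (b := t + 3)
    (by fun_prop) (fun s hs => by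
      have : 3 < |s - t| := by
        by_contra h
        push Not at h
        rw [abs_le] at h
        exact hs ⟨by linarith, by linarith⟩
      rw [max_eq_left]
      · simp
      · exact (min_le_right _ _).trans (by linarith)) (g := fun _ => |C|) continuousOn_const
      (C := |C|) (fun x hx => by simp)
  have := hasDerivAt_integral_of_dominated_loc_of_deriv_le (μ := volume.restrict (coneGT N ρ Ω))
    (F := fun t x => k (t - Real.log ‖x‖) * Real.exp (-N * Real.log ‖x‖) * g x)
    (F' := fun t x => deriv k (t - Real.log ‖x‖) * Real.exp (-N * Real.log ‖x‖) * g x)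
    (x₀ := t) (Metric.ball_mem_nhds t one_pos) (bound := fun x =>
      |M| * max 0 (min 1 (3 - |Real.log ‖x‖ - t|)) * Real.exp (-N * Real.log ‖x‖) * |C|)
    (Eventually.of_forall fun s => (Sint_int hΩ hρ hk.continuous hsupp hg hgC s).aestronglyMeasurable)
    (Sint_int hΩ hρ hk.continuous hsupp hg hgC t)
    (Sint_int hΩ hρ hk' hs' hg hgC t).aestronglyMeasurable
    ?_ hb ?_
  · exact this.2
  · refine (ae_restrict_iff' hU.measurableSet).2 (Eventually.of_forall fun x hx s hs => ?_)
    rw [norm_mul, norm_mul, Real.norm_eq_abs, Real.norm_eq_abs, Real.norm_eq_abs, Real.abs_exp]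
    have hg1 : |g x| ≤ |C| := (hgC x hx).trans (le_abs_self _)
    refine mul_le_mul (mul_le_mul_of_nonneg_right ?_ (Real.exp_nonneg _)) hg1 (abs_nonneg _)
      (by positivity)
    rw [Metric.mem_ball, Real.dist_eq, abs_lt] at hs
    by_cases h : s - Real.log ‖x‖ ∈ Icc (-1:ℝ) 1
    · have : |Real.log ‖x‖ - t| ≤ 2 := by
        rw [abs_le]; constructor <;> linarith [h.1, h.2]
      rw [min_eq_left (by linarith), max_eq_right zero_le_one, mul_one]
      exact hM' _
    · rw [hs' _ h]; simp only [abs_zero]; positivity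
  · refine Eventually.of_forall fun x s _ => ?_
    have h1 : HasDerivAt (fun s => k (s - Real.log ‖x‖)) (deriv k (s - Real.log ‖x‖)) s := by
      have := (hk.differentiable (by norm_num) (s - Real.log ‖x‖)).hasDerivAt
      have := this.comp s ((hasDerivAt_id s).sub_const (Real.log ‖x‖))
      exact this.congr_deriv (by simp)
    exact (h1.mul_const _).mul_const _

theorem Sint_mono (hΩ : IsConeDomain N Ω) (hρ : 0 < ρ) {g g' : Euc N → ℝ}
    (hg : ContinuousOn g (coneGT N ρ Ω)) (hg' : ContinuousOn g' (coneGT N ρ Ω)) {C C' : ℝ}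
    (hgC : ∀ x ∈ coneGT N ρ Ω, |g x| ≤ C) (hgC' : ∀ x ∈ coneGT N ρ Ω, |g' x| ≤ C') (t : ℝ)
    (hle : ∀ x ∈ coneGT N ρ Ω, g x ≤ g' x) : Sint N Ω ρ jj g t ≤ Sint N Ω ρ jj g' t := by
  refine setIntegral_mono_on (Sint_int hΩ hρ jj_contDiff.continuous (fun s => jj_zero) hg hgC t)
    (Sint_int hΩ hρ jj_contDiff.continuous (fun s => jj_zero) hg' hgC' t)
    (isOpen_coneGT hΩ hρ).measurableSet (fun x hx => ?_)
  exact mul_le_mul_of_nonneg_left (hle x hx) (mul_nonneg (jj_nonneg _) (Real.exp_nonneg _))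

/-- uniform upper bound -/
def Bd (N : ℕ) : ℝ := Real.exp (2 * N) * (volume (Metric.ball (0 : Euc N) 1)).toReal

theorem Bd_nonneg (N : ℕ) : 0 ≤ Bd N := by unfold Bd; positivity

theorem Sint_one_le (hΩ : IsConeDomain N Ω) (hρ : 0 < ρ) (t : ℝ) :
    Sint N Ω ρ jj (fun _ => 1) t ≤ Bd N := by
  have hU := isOpen_coneGT hΩ hρ
  set S := Metric.closedBall (0 : Euc N) (Real.exp (t + 1)) with hS
  have hb : IntegrableOn (fun x : Euc N => S.indicator
      (fun _ => Real.exp (-N * (t - 1))) x) univ := by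
    rw [integrableOn_univ, integrable_indicator_iff measurableSet_closedBall]
    exact integrableOn_const (measure_closedBall_lt_top.ne)
  have h1 : Sint N Ω ρ jj (fun _ => 1) t ≤ ∫ x in coneGT N ρ Ω, S.indicator
      (fun _ => Real.exp (-N * (t - 1))) x := by
    refine setIntegral_mono_on (Sint_int hΩ hρ jj_contDiff.continuous (fun s => jj_zero)
      continuousOn_const (C := 1) (by simp) t) (hb.mono_set (subset_univ _)) hU.measurableSet ?_
    intro x hx
    have hn : 0 < ‖x‖ := hρ.trans hx.1
    by_cases h : t - Real.log ‖x‖ ∈ Icc (-1:ℝ) 1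
    · have : x ∈ S := by
        simp only [hS, Metric.mem_closedBall, dist_zero_right]
        rw [← Real.log_le_iff_le_exp hn]; linarith [h.1]
      rw [indicator_of_mem this, mul_one]
      calc jj (t - Real.log ‖x‖) * Real.exp (-N * Real.log ‖x‖)
          ≤ 1 * Real.exp (-N * (t - 1)) := by
            refine mul_le_mul (jj_le_one _) ?_ (Real.exp_nonneg _) zero_le_one
            apply Real.exp_le_exp.2
            have : (0:ℝ) ≤ N := Nat.cast_nonneg _
            nlinarith [h.2]
        _ = _ := one_mul _
    · rw [jj_zero h]
      simp only [zero_mul]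
      exact indicator_nonneg (fun _ _ => Real.exp_nonneg _) _
  have h2 : ∫ x in coneGT N ρ Ω, S.indicator (fun _ => Real.exp (-N * (t - 1))) x ≤
      ∫ x, S.indicator (fun _ => Real.exp (-N * (t - 1))) x :=
    setIntegral_le_integral (by simpa using hb)
      (Eventually.of_forall fun x => indicator_nonneg (fun _ _ => Real.exp_nonneg _) _)
  refine (h1.trans h2).trans (le_of_eq ?_)
  rw [integral_indicator measurableSet_closedBall, setIntegral_const, smul_eq_mul, measureReal_def,
    Measure.addHaar_closedBall _ _ (Real.exp_nonneg _)]
  simp only [finrank_euclideanSpace, Fintype.card_fin]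
  rw [ENNReal.toReal_mul, ENNReal.toReal_ofReal (by positivity), ← Real.exp_nat_mul, Bd]
  have : Real.exp (2 * N) = Real.exp (N * (t + 1)) * Real.exp (-N * (t - 1)) := by
    rw [← Real.exp_add]; ring_nf
  rw [this]; ring

theorem rpow_lower {X ε q : ℝ} (hX0 : 0 ≤ X) (hX1 : X ≤ 1) (hε : 0 ≤ ε) (hq : 0 < q) :
    ε ^ q * (X - ε) ≤ X ^ q := by
  rcases le_total X ε with h | h
  · have h1 : 0 ≤ ε ^ q := Real.rpow_nonneg hε _
    have h2 : 0 ≤ X ^ q := Real.rpow_nonneg hX0 _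
    nlinarith
  · have h1 : 0 ≤ ε ^ q := Real.rpow_nonneg hε _
    have h2 : ε ^ q ≤ X ^ q := Real.rpow_le_rpow hε h hq.le
    nlinarith

theorem Sint_lower (hΩ : IsConeDomain N Ω) (hρ : 0 < ρ) {P X : Euc N → ℝ}
    (hP : ContinuousOn P (coneGT N ρ Ω)) (hX : ContinuousOn X (coneGT N ρ Ω))
    (hP0 : ∀ x ∈ coneGT N ρ Ω, 0 ≤ P x) (hP1 : ∀ x ∈ coneGT N ρ Ω, P x ≤ 1)
    (hX0 : ∀ x ∈ coneGT N ρ Ω, 0 ≤ X x) (hX1 : ∀ x ∈ coneGT N ρ Ω, X x ≤ 1)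
    {c q t : ℝ} (hq : 0 < q) (hc : 0 < c) (h : c ≤ Sint N Ω ρ jj (fun x => P x * X x) t) :
    (c / (2 * (Bd N + 1))) ^ q * (c / 2) ≤ Sint N Ω ρ jj (fun x => P x * X x ^ q) t := by
  have hB := Bd_nonneg N
  set ε := c / (2 * (Bd N + 1)) with hε
  have hε0 : 0 ≤ ε := by positivity
  have hPX : ContinuousOn (fun x => P x * X x) (coneGT N ρ Ω) := hP.mul hX
  have hPXq : ContinuousOn (fun x => P x * X x ^ q) (coneGT N ρ Ω) :=
    hP.mul (hX.rpow_const (fun x _ => Or.inr hq.le))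
  have hb1 : ∀ x ∈ coneGT N ρ Ω, |P x * X x| ≤ 1 := fun x hx => by
    rw [abs_of_nonneg (mul_nonneg (hP0 x hx) (hX0 x hx))]
    exact mul_le_one₀ (hP1 x hx) (hX0 x hx) (hX1 x hx)
  have hb2 : ∀ x ∈ coneGT N ρ Ω, |P x * X x ^ q| ≤ 1 := fun x hx => by
    have h0 := Real.rpow_nonneg (hX0 x hx) q
    rw [abs_of_nonneg (mul_nonneg (hP0 x hx) h0)]
    exact mul_le_one₀ (hP1 x hx) h0 (Real.rpow_le_one (hX0 x hx) (hX1 x hx) hq.le)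
  have i1 := Sint_int hΩ hρ jj_contDiff.continuous (fun s => jj_zero) hPX hb1 t
  have i2 := Sint_int hΩ hρ jj_contDiff.continuous (fun s => jj_zero) hPXq hb2 t
  have i3 := Sint_int hΩ hρ jj_contDiff.continuous (fun s => jj_zero) 
    (continuousOn_const (c := (1:ℝ))) (C := 1) (by simp) t
  have hl : ∫ x in coneGT N ρ Ω, ((ε ^ q) * (jj (t - Real.log ‖x‖) * Real.exp (-N * Real.log ‖x‖) *
      (P x * X x)) - (ε ^ q * ε) * (jj (t - Real.log ‖x‖) * Real.exp (-N * Real.log ‖x‖) * 1)) ≤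
      Sint N Ω ρ jj (fun x => P x * X x ^ q) t := by
    refine setIntegral_mono_on ((i1.const_mul (ε ^ q)).sub (i3.const_mul (ε ^ q * ε))) i2
      (isOpen_coneGT hΩ hρ).measurableSet (fun x hx => ?_)
    have hw : 0 ≤ jj (t - Real.log ‖x‖) * Real.exp (-N * Real.log ‖x‖) :=
      mul_nonneg (jj_nonneg _) (Real.exp_nonneg _)
    have hr := rpow_lower (hX0 x hx) (hX1 x hx) hε0 hq
    have h1 : P x * (ε ^ q * (X x - ε)) ≤ P x * X x ^ q := mul_le_mul_of_nonneg_left hr (hP0 x hx)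
    have hεq : 0 ≤ ε ^ q * ε := mul_nonneg (Real.rpow_nonneg hε0 _) hε0
    have h2 : P x * (ε ^ q * ε) ≤ 1 * (ε ^ q * ε) := mul_le_mul_of_nonneg_right (hP1 x hx) hεq
    have h3 := mul_le_mul_of_nonneg_left (show ε ^ q * (P x * X x) - ε ^ q * ε ≤ P x * X x ^ q by
      linarith) hw
    linarith
  rw [integral_sub (i1.const_mul (ε ^ q)) (i3.const_mul (ε ^ q * ε)), integral_const_mul,
    integral_const_mul] at hl
  have hS1 := Sint_one_le hΩ hρ t
  change ε ^ q * Sint N Ω ρ jj (fun x => P x * X x) t - ε ^ q * ε * Sint N Ω ρ jj (fun _ => 1) t ≤ _ at hl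
  have hεB : ε * Bd N ≤ c / 2 := by
    rw [hε, div_mul_eq_mul_div, div_le_div_iff₀ (by positivity) (by positivity)]
    nlinarith
  have hq0 : 0 ≤ ε ^ q := Real.rpow_nonneg hε0 _
  have h5 : c / 2 ≤ Sint N Ω ρ jj (fun x => P x * X x) t - ε * Sint N Ω ρ jj (fun _ => 1) t := by
    have := mul_le_mul_of_nonneg_left hS1 hε0
    linarith
  have h6 := mul_le_mul_of_nonneg_left h5 hq0
  linarith

end

/-- concave bounded truncation -/
def FF (s T : ℝ) : ℝ := 1 - (1 + T) ^ (-s)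

theorem FF_D2 (s : ℝ) {T : ℝ} (hT : 0 < T) :
    D2At (FF s) T (s * (1 + T) ^ (-(s + 1))) (-(s * (s + 1)) * (1 + T) ^ (-(s + 2))) := by
  have hb : ∀ a : ℝ, ∀ S, 0 < S → HasDerivAt (fun S : ℝ => (1 + S) ^ a) (a * (1 + S) ^ (a - 1)) S := by
    intro a S hS
    have := ((hasDerivAt_id S).const_add 1).rpow_const (p := a) (Or.inl (by simp; linarith))
    exact this.congr_deriv (by simp)
  refine ⟨fun S => s * (1 + S) ^ (-(s + 1)), ?_, rfl, ?_⟩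
  · filter_upwards [Ioi_mem_nhds hT] with S hS
    refine ((hb (-s) S hS).const_sub 1).congr_deriv ?_
    rw [show -s - 1 = -(s + 1) by ring]; ring
  · refine ((hb (-(s + 1)) T hT).const_mul s).congr_deriv ?_
    rw [show -(s + 1) - 1 = -(s + 2) by ring]; ring

theorem FF_contDiffAt (s : ℝ) {T : ℝ} (hT : 0 < T) : ContDiffAt ℝ 2 (FF s) T := by
  unfold FF
  refine contDiffAt_const.sub ?_
  exact (contDiffAt_const.add contDiffAt_id).rpow_const_of_ne (by simp; linarith)

theorem FF_le_one {s T : ℝ} (hT : 0 < T) : FF s T ≤ 1 := by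
  unfold FF
  have : 0 ≤ (1 + T) ^ (-s) := by positivity
  linarith

theorem FF_pos {s T : ℝ} (hs : 0 < s) (hT : 0 < T) : 0 < FF s T := by
  unfold FF
  have : (1 + T) ^ (-s) < 1 := Real.rpow_lt_one_of_one_lt_of_neg (by linarith) (by linarith)
  linarith

theorem FF_le {s T : ℝ} (_hs : 0 < s) (hT : 0 < T) : FF s T ≤ max 1 s * (T / (1 + T)) := by
  unfold FF
  have h1 : (1 + T) ^ (-s) = ((1 + T)⁻¹) ^ s := by
    rw [Real.rpow_neg (by linarith), Real.inv_rpow (by linarith)]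
  have h2 : T / (1 + T) = 1 - (1 + T)⁻¹ := by field_simp; ring
  rw [h1, h2]
  set x := (1 + T)⁻¹
  have hx0 : 0 < x := by positivity
  have hx1 : x ≤ 1 := inv_le_one_of_one_le₀ (by linarith)
  rcases le_total s 1 with h | h
  · rw [max_eq_left h, one_mul]
    have := Real.rpow_le_rpow_of_exponent_ge hx0 hx1 h
    rw [Real.rpow_one] at this
    linarith
  · rw [max_eq_right h]
    have := one_add_mul_self_le_rpow_one_add (s := x - 1) (by linarith) h
    rw [add_sub_cancel] at this
    linarith

section
variable {N : ℕ} {Ω : Set (Euc N)} {lam1 : ℝ} {φ : Euc N → ℝ} {ρ : ℝ}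

theorem lap_w (hΩ : IsConeDomain N Ω) (hphi : DirichletEigenpair N Ω lam1 φ)
    {μ γ : ℝ} (hρ : 0 < ρ) (hγ : γ * (γ + N - 2) = lam1 - μ) {x : Euc N} (hx : x ∈ coneGT N ρ Ω) :
    lap N (fun y => (fun l => Real.exp (γ * l) * 1) (Real.log ‖y‖) * (fun t => t) (PhiExt N φ y)) x
      = -(μ * ‖x‖ ^ (-(2:ℝ)) * (Real.exp (γ * Real.log ‖x‖) * PhiExt N φ x)) := by
  have hU := isOpen_coneGT hΩ hρ
  have hx0 := cone_ne hρ hx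
  have hn : 0 < ‖x‖ := by simpa using hx0
  have h1 : D2At (fun _ : ℝ => (1:ℝ)) (Real.log ‖x‖) 0 0 :=
    ⟨fun _ => 0, by filter_upwards with s using hasDerivAt_const _ _, rfl, hasDerivAt_const _ _⟩
  have h2 : D2At (fun t : ℝ => t) (PhiExt N φ x) 1 0 :=
    ⟨fun _ => 1, by filter_upwards with s using hasDerivAt_id _, rfl, hasDerivAt_const _ _⟩
  have hw := (psi_c2 hphi hρ γ (contDiff_const (c := (1:ℝ))) (K := fun t => t) (fun t _ => contDiffAt_id)).contDiffAt
    (hU.mem_nhds hx)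
  have he : lap N (PhiExt N φ) x = -lam1 * ‖x‖ ^ (-(2:ℝ)) * PhiExt N φ x :=
    hphi.eigen x (coneGT_sub hρ hx)
  rw [lap_radial_mul hx0 (D2_exp_mul (γ := γ) h1) h2
    ((phi_c2 hphi hρ).contDiffAt (hU.mem_nhds hx)) (phi_hom hΩ hphi hρ hx) hw, he, div_eq_mul_inv,
    inv_sq_exp hn, rpow_neg_two hn]
  have : lam1 = γ * (γ + N - 2) + μ := by linarith
  rw [this]
  ring

theorem exists_v (hΩ : IsConeDomain N Ω) (hphi : DirichletEigenpair N Ω lam1 φ)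
    {μ γ α p q : ℝ} (hρ : 0 < ρ) (hγ : γ * (γ + N - 2) = lam1 - μ) (hq1 : 1 < q) {u : Euc N → ℝ}
    (hu : IsPosSolE N ρ μ α p q Ω u) :
    ∃ (v : Euc N → ℝ) (C s : ℝ), 0 < C ∧ 0 < s ∧ ContDiffOn ℝ 2 v (coneGT N ρ Ω) ∧
      (∀ x ∈ coneGT N ρ Ω, 0 < v x) ∧
      (∀ x ∈ coneGT N ρ Ω, v x ≤ Real.exp (γ * Real.log ‖x‖)) ∧
      (∀ x ∈ coneGT N ρ Ω, v x / C ≤ u x) ∧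
      (∀ x ∈ coneGT N ρ Ω, s * (v x / C) ^ q * (rieszConv N α ρ Ω (fun y => u y ^ p) x).toReal ≤
        -lap N v x - μ * ‖x‖ ^ (-(2:ℝ)) * v x) := by
  obtain ⟨hu2, -, hu0, -, huL⟩ := hu
  have hU := isOpen_coneGT hΩ hρ
  set s := q - 1 with hs
  have hs0 : 0 < s := by simp [hs]; linarith
  set w : Euc N → ℝ := fun y => (fun l => Real.exp (γ * l) * 1) (Real.log ‖y‖) *
    (fun t => t) (PhiExt N φ y) with hw
  have hwe : ∀ x, w x = Real.exp (γ * Real.log ‖x‖) * PhiExt N φ x := fun x => by simp [hw]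
  have hw2 : ContDiffOn ℝ 2 w (coneGT N ρ Ω) :=
    psi_c2 hphi hρ γ (contDiff_const (c := (1:ℝ))) (K := fun t => t) (fun t _ => contDiffAt_id)
  have hw0 : ∀ x ∈ coneGT N ρ Ω, 0 < w x := fun x hx => by
    rw [hwe]; exact mul_pos (Real.exp_pos _) (phi_pos hphi hx)
  have hw1 : ∀ x ∈ coneGT N ρ Ω, w x ≤ Real.exp (γ * Real.log ‖x‖) := fun x hx => by
    rw [hwe]; exact mul_le_of_le_one_right (Real.exp_nonneg _) (phi_le hphi hx)
  have hT : ∀ x ∈ coneGT N ρ Ω, 0 < u x / w x := fun x hx => div_pos (hu0 x hx) (hw0 x hx)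
  have hv2 : ContDiffOn ℝ 2 (fun y => w y * FF s (u y / w y)) (coneGT N ρ Ω) := by
    refine hw2.mul fun x hx => ?_
    exact ContDiffAt.comp_contDiffWithinAt (g := FF s) (f := fun y => u y / w y) x
      (FF_contDiffAt s (hT x hx)) ((hu2.div hw2 (fun x hx => (hw0 x hx).ne')) x hx)
  have hC : 0 < max 1 s := by positivity
  have hvb : ∀ x ∈ coneGT N ρ Ω, w x * FF s (u x / w x) / max 1 s ≤ u x / (1 + u x / w x) := by
    intro x hx
    have h0 := hw0 x hx
    rw [div_le_iff₀ hC]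
    calc _ ≤ w x * (max 1 s * (u x / w x / (1 + u x / w x))) :=
          mul_le_mul_of_nonneg_left (FF_le hs0 (hT x hx)) h0.le
      _ = _ := by
          have := hT x hx
          have : u x = w x * (u x / w x) := by field_simp
          set T := u x / w x
          rw [this]; ring
  refine ⟨fun y => w y * FF s (u y / w y), max 1 s, s, hC, hs0, hv2, ?_, ?_, ?_, ?_⟩
  · exact fun x hx => mul_pos (hw0 x hx) (FF_pos hs0 (hT x hx))
  · exact fun x hx => (mul_le_of_le_one_right (hw0 x hx).le (FF_le_one (hT x hx))).trans (hw1 x hx)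
  · intro x hx
    exact (hvb x hx).trans (div_le_self (hu0 x hx).le (by linarith [hT x hx]))
  · intro x hx
    have hm := hU.mem_nhds hx
    have hTx := hT x hx
    have h1 := lap_concave_le (hu2.contDiffAt hm) (hw2.contDiffAt hm) (hw0 x hx) (FF_D2 s hTx)
      (by have : 0 ≤ (1 + u x / w x) ^ (-(s + 2)) := by positivity
          have : 0 ≤ s * (s + 1) := by positivity
          rw [neg_mul]
          apply neg_nonpos_of_nonneg; positivity) (hv2.contDiffAt hm)
    have h2 : lap N w x = -(μ * ‖x‖ ^ (-(2:ℝ)) * w x) := by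
      rw [hwe, hw]; exact lap_w hΩ hphi hρ hγ hx
    have h3 := huL x hx
    have hsq : s + 1 = q := by simp [hs]
    rw [hsq, h2] at h1
    set T := u x / w x with hTd
    set A := (rieszConv N α ρ Ω (fun y => u y ^ p) x).toReal
    have hA : 0 ≤ A := ENNReal.toReal_nonneg
    have huT : u x = w x * T := by rw [hTd]; field_simp [(hw0 x hx).ne']
    have h4 : (w x * FF s T / max 1 s) ^ q ≤ (1 + T) ^ (-q) * u x ^ q := by
      have e : (1 + T) ^ (-q) * u x ^ q = (u x / (1 + T)) ^ q := by
        rw [Real.div_rpow (hu0 x hx).le (by linarith), Real.rpow_neg (by linarith)]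
        field_simp
      rw [e]
      refine Real.rpow_le_rpow ?_ (hvb x hx) (by linarith)
      exact div_nonneg (mul_nonneg (hw0 x hx).le (FF_pos hs0 hTx).le) hC.le
    have hf : 0 ≤ s * (1 + T) ^ (-q) := by positivity
    have h5 := mul_le_mul_of_nonneg_left h3 hf
    have h6 := mul_le_mul_of_nonneg_left h4 (mul_nonneg hs0.le hA)
    set R := ‖x‖ ^ (-(2:ℝ))
    set G := (1 + T) ^ (-q)
    simp only
    rw [← hTd]
    have e1 : s * G * (-lap N u x - μ * R * u x) = s * G * (-lap N u x) - s * G * μ * R * (w x * T) := by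
      rw [← huT]; ring
    rw [e1] at h5
    nlinarith
end

section
variable {N : ℕ} {Ω : Set (Euc N)} {lam1 : ℝ} {φ : Euc N → ℝ} {ρ : ℝ}

/-- the normalised function `v r^{-γ}` -/
def XX (N : ℕ) (γ : ℝ) (v : Euc N → ℝ) (x : Euc N) : ℝ := v x * Real.exp (-γ * Real.log ‖x‖)

theorem XX_cont (hρ : 0 < ρ) (γ : ℝ) {v : Euc N → ℝ} (hv : ContDiffOn ℝ 2 v (coneGT N ρ Ω)) :
    ContinuousOn (XX N γ v) (coneGT N ρ Ω) :=
  hv.continuousOn.mul (logn_continuousOn hρ (η := fun l => Real.exp (-γ * l)) (by fun_prop))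

theorem XX_le (γ : ℝ) {v : Euc N → ℝ} {x : Euc N} (h : v x ≤ Real.exp (γ * Real.log ‖x‖)) :
    XX N γ v x ≤ 1 := by
  unfold XX
  calc _ ≤ Real.exp (γ * Real.log ‖x‖) * Real.exp (-γ * Real.log ‖x‖) :=
        mul_le_mul_of_nonneg_right h (Real.exp_nonneg _)
    _ = 1 := by rw [← Real.exp_add]; simp

theorem XX_eq (γ : ℝ) (v : Euc N → ℝ) (x : Euc N) :
    v x = Real.exp (γ * Real.log ‖x‖) * XX N γ v x := by
  unfold XX
  rw [mul_left_comm, ← Real.exp_add]; simp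

theorem jj_supp : ∀ s, s ∉ Icc (-1:ℝ) 1 → jj s = 0 := fun _ h => jj_zero h

theorem djj_contDiff : ContDiff ℝ 2 (deriv jj) := by
  have : ContDiff ℝ (2 + 1) jj := by
    have := jj_contDiff
    norm_num
    exact this
  exact (contDiff_succ_iff_deriv.1 this).2.2

theorem ddjj_cont : Continuous (deriv (deriv jj)) := djj_contDiff.continuous_deriv (by norm_num)

theorem ode_ineq (hΩ : IsConeDomain N Ω) (hphi : DirichletEigenpair N Ω lam1 φ)
    {μ γ γ' c0 : ℝ} (hρ : 0 < ρ) (hγ : γ + γ' = 2 - N) (hγ' : γ' * (γ' + N - 2) = lam1 - μ)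
    (hc0 : 0 ≤ c0) {v Y : Euc N → ℝ} (hv : ContDiffOn ℝ 2 v (coneGT N ρ Ω))
    (hv0 : ∀ x ∈ coneGT N ρ Ω, 0 < v x)
    (hv1 : ∀ x ∈ coneGT N ρ Ω, v x ≤ Real.exp (γ * Real.log ‖x‖))
    (hY : ContinuousOn Y (coneGT N ρ Ω)) (hY0 : ∀ x ∈ coneGT N ρ Ω, 0 ≤ Y x)
    (hY1 : ∀ x ∈ coneGT N ρ Ω, Y x ≤ 1)
    (hL : ∀ x ∈ coneGT N ρ Ω, c0 * Real.exp ((γ - 2) * Real.log ‖x‖) * Y x ≤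
      -lap N v x - μ * ‖x‖ ^ (-(2:ℝ)) * v x) {t : ℝ} (ht : Real.log ρ + 1 < t) :
    c0 * Sint N Ω ρ jj (fun x => PhiExt N φ x * Y x) t ≤
      -(Sint N Ω ρ (deriv (deriv jj)) (fun x => PhiExt N φ x * XX N γ v x) t -
        (γ' - γ) * Sint N Ω ρ (deriv jj) (fun x => PhiExt N φ x * XX N γ v x) t) := by
  have hd1 : deriv (fun s => jj (t - s)) = fun s => -deriv jj (t - s) := by
    funext s; exact deriv_comp_const_sub jj t s
  have hd2 : deriv (deriv (fun s => jj (t - s))) = fun s => deriv (deriv jj) (t - s) := by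
    rw [hd1]; funext s
    rw [deriv.fun_neg, deriv_comp_const_sub (deriv jj) t s, neg_neg]
  have h := test_ineq hΩ hphi hρ hγ hγ' hc0 hv (fun x hx => (hv0 x hx).le) hv1 hY hY0 hY1 hL
    (θ := fun s => jj (t - s)) (a := t - 1) (b := t + 1)
    ((jj_contDiff.of_le (by norm_num)).comp (contDiff_const.sub contDiff_id))
    (fun s => jj_nonneg _) (by linarith) (fun s hs => jj_zero (fun h => hs
      ⟨by linarith [h.2], by linarith [h.1]⟩))
  rw [hd2, hd1] at h
  have hXc : ContinuousOn (fun x => PhiExt N φ x * XX N γ v x) (coneGT N ρ Ω) :=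
    (phi_c2 hphi hρ).continuousOn.mul (XX_cont hρ γ hv)
  have hXb : ∀ x ∈ coneGT N ρ Ω, |PhiExt N φ x * XX N γ v x| ≤ 1 := fun x hx => by
    have h1 := phi_pos hphi hx
    have h2 : 0 ≤ XX N γ v x := mul_nonneg (hv0 x hx).le (Real.exp_nonneg _)
    rw [abs_of_nonneg (by positivity)]
    exact mul_le_one₀ (phi_le hphi hx) h2 (XX_le γ (hv1 x hx))
  have i1 := Sint_int hΩ hρ djj_contDiff.continuous (deriv_supp jj_supp) hXc hXb t
  have i2 := Sint_int hΩ hρ ddjj_cont (deriv_supp (deriv_supp jj_supp)) hXc hXb t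
  refine h.trans (le_of_eq ?_)
  congr 1
  unfold Sint
  rw [← integral_const_mul, ← integral_sub i2 (i1.const_mul _)]
  refine integral_congr_ae (Eventually.of_forall fun x => ?_)
  simp only [XX]
  ring

theorem Sint_pos (hΩ : IsConeDomain N Ω) (hρ : 0 < ρ) {g : Euc N → ℝ}
    (hg : ContinuousOn g (coneGT N ρ Ω)) {C : ℝ} (hgC : ∀ x ∈ coneGT N ρ Ω, |g x| ≤ C)
    (hg0 : ∀ x ∈ coneGT N ρ Ω, 0 < g x) {t : ℝ} (ht : Real.log ρ < t) :
    0 < Sint N Ω ρ jj g t := by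
  have hU := isOpen_coneGT hΩ hρ
  have hi := Sint_int hΩ hρ jj_contDiff.continuous jj_supp hg hgC t
  have hcont : ContinuousOn (fun x : Euc N => jj (t - Real.log ‖x‖)) (coneGT N ρ Ω) :=
    logn_continuousOn hρ (η := fun l => jj (t - l)) (jj_contDiff.continuous.comp (by fun_prop))
  unfold Sint
  rw [setIntegral_pos_iff_support_of_nonneg_ae _ hi]
  · have hO := hcont.isOpen_inter_preimage hU (isOpen_Ioi (a := (0:ℝ)))
    obtain ⟨ω, hω⟩ := hΩ.2.1.nonempty
    have hω1 : ‖ω‖ = 1 := by simpa using hΩ.1 hω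
    have hne : (coneGT N ρ Ω ∩ (fun x : Euc N => jj (t - Real.log ‖x‖)) ⁻¹' Ioi 0).Nonempty := by
      have hn : ‖Real.exp t • ω‖ = Real.exp t := by
        rw [norm_smul, hω1, mul_one, Real.norm_eq_abs, abs_of_pos (Real.exp_pos _)]
      refine ⟨Real.exp t • ω, ⟨?_, ?_⟩, ?_⟩
      · rw [hn]; exact (Real.log_lt_iff_lt_exp hρ).1 ht
      · rw [hn, smul_smul, inv_mul_cancel₀ (Real.exp_pos _).ne', one_smul]; exact hω
      · simp only [mem_preimage, hn, Real.log_exp, sub_self, jj_zero_eq, mem_Ioi, zero_lt_one]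
    refine (hO.measure_pos volume hne).trans_le (measure_mono ?_)
    rintro x ⟨hx, hj⟩
    refine ⟨?_, hx⟩
    have := hg0 x hx
    have hj' : 0 < jj (t - Real.log ‖x‖) := hj
    exact ne_of_gt (by positivity)
  · filter_upwards [ae_restrict_mem hU.measurableSet] with x hx
    exact mul_nonneg (mul_nonneg (jj_nonneg _) (Real.exp_nonneg _)) (hg0 x hx).le

theorem riesz_pt {n α p γ C t l U V X D J P : ℝ} (hn : 0 ≤ n) (hα : 0 ≤ α) (hp : 0 < p) (hγ : γ ≤ 0)
    (hC : 0 < C) (hl : t - l ∈ Icc (-1:ℝ) 1) (hX : 0 ≤ X) (hV : V = Real.exp (γ * l) * X)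
    (hU : V / C ≤ U) (hD0 : 0 < D) (hD : D ≤ 4 * Real.exp t) (hJ0 : 0 ≤ J) (hJ : J ≤ 1)
    (hP0 : 0 ≤ P) (hP : P ≤ 1) :
    (Real.exp (-n) * Real.exp (γ * p) * C ^ (-p) * 4 ^ (-α)) * Real.exp ((n - α + γ * p) * t) *
      (J * Real.exp (-n * l) * (P * X ^ p)) ≤ U ^ p * D ^ (-α) := by
  have hXp : 0 ≤ X ^ p := Real.rpow_nonneg hX _
  have h1 : J * Real.exp (-n * l) * (P * X ^ p) ≤ Real.exp (-n * (t - 1)) * X ^ p := by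
    have e : Real.exp (-n * l) ≤ Real.exp (-n * (t - 1)) := by
      apply Real.exp_le_exp.2; nlinarith [hl.2]
    have e1 : J * Real.exp (-n * l) ≤ Real.exp (-n * (t - 1)) :=
      (mul_le_of_le_one_left (Real.exp_nonneg _) hJ).trans e
    exact mul_le_mul e1 (mul_le_of_le_one_left hXp hP) (by positivity) (Real.exp_nonneg _)
  have h2 : (4:ℝ) ^ (-α) * Real.exp (-α * t) ≤ D ^ (-α) := by
    have : (4 * Real.exp t) ^ (-α) ≤ D ^ (-α) :=
      Real.rpow_le_rpow_of_nonpos hD0 hD (by linarith)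
    rw [Real.mul_rpow (by norm_num) (Real.exp_nonneg _), ← Real.exp_mul] at this
    rwa [mul_comm (-α) t]
  have h3 : Real.exp (γ * p * (t + 1)) * X ^ p * C ^ (-p) ≤ U ^ p := by
    have h0 : 0 ≤ V / C := by rw [hV]; positivity
    refine le_trans ?_ (Real.rpow_le_rpow h0 hU hp.le)
    rw [Real.div_rpow (by rw [hV]; positivity) hC.le, hV, Real.mul_rpow (Real.exp_nonneg _) hX,
      ← Real.exp_mul, Real.rpow_neg hC.le, div_eq_mul_inv]
    have : Real.exp (γ * p * (t + 1)) ≤ Real.exp (γ * l * p) := by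
      apply Real.exp_le_exp.2
      have : l ≤ t + 1 := by linarith [hl.1]
      have h5 : γ * (t + 1) ≤ γ * l := mul_le_mul_of_nonpos_left this hγ
      nlinarith
    gcongr
  have hCp : 0 ≤ C ^ (-p) := by positivity
  calc _ ≤ (Real.exp (-n) * Real.exp (γ * p) * C ^ (-p) * 4 ^ (-α)) *
        Real.exp ((n - α + γ * p) * t) * (Real.exp (-n * (t - 1)) * X ^ p) :=
        mul_le_mul_of_nonneg_left h1 (by positivity)
    _ = (Real.exp (γ * p * (t + 1)) * X ^ p * C ^ (-p)) * ((4:ℝ) ^ (-α) * Real.exp (-α * t)) := by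
        have : Real.exp (-n) * Real.exp (γ * p) * Real.exp ((n - α + γ * p) * t) *
            Real.exp (-n * (t - 1)) = Real.exp (γ * p * (t + 1)) * Real.exp (-α * t) := by
          simp only [← Real.exp_add]; congr 1; ring
        linear_combination (C ^ (-p) * 4 ^ (-α) * X ^ p) * this
    _ ≤ _ := mul_le_mul h3 h2 (by positivity) (le_trans (by positivity) h3)

theorem riesz_lower (hN : 2 ≤ N) (hΩ : IsConeDomain N Ω) (hphi : DirichletEigenpair N Ω lam1 φ)
    (hρ : 0 < ρ) {γ α p C : ℝ} (hα : 0 ≤ α) (hp : 0 < p) (hγ : γ ≤ 0) (hC : 0 < C)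
    {u v : Euc N → ℝ} (hv : ContDiffOn ℝ 2 v (coneGT N ρ Ω))
    (hv0 : ∀ x ∈ coneGT N ρ Ω, 0 < v x)
    (hv1 : ∀ x ∈ coneGT N ρ Ω, v x ≤ Real.exp (γ * Real.log ‖x‖))
    (huv : ∀ x ∈ coneGT N ρ Ω, v x / C ≤ u x) {x : Euc N} (hx : x ∈ coneGT N ρ Ω)
    (hfin : rieszConv N α ρ Ω (fun y => u y ^ p) x < ⊤) :
    (Real.exp (-N) * Real.exp (γ * p) * C ^ (-p) * 4 ^ (-α)) *
      Real.exp ((N - α + γ * p) * Real.log ‖x‖) *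
      Sint N Ω ρ jj (fun y => PhiExt N φ y * XX N γ v y ^ p) (Real.log ‖x‖) ≤
      (rieszConv N α ρ Ω (fun y => u y ^ p) x).toReal := by
  have hU := isOpen_coneGT hΩ hρ
  have hXc := XX_cont hρ γ hv
  have hX0 : ∀ y ∈ coneGT N ρ Ω, 0 ≤ XX N γ v y := fun y hy =>
    mul_nonneg (hv0 y hy).le (Real.exp_nonneg _)
  have hnx : 0 < ‖x‖ := hρ.trans hx.1
  have hgc : ContinuousOn (fun y => PhiExt N φ y * XX N γ v y ^ p) (coneGT N ρ Ω) :=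
    (phi_c2 hphi hρ).continuousOn.mul (hXc.rpow_const (fun x _ => Or.inr hp.le))
  have hgb : ∀ y ∈ coneGT N ρ Ω, |PhiExt N φ y * XX N γ v y ^ p| ≤ 1 := fun y hy => by
    have h1 := phi_pos hphi hy
    have h2 := hX0 y hy
    rw [abs_of_nonneg (by positivity)]
    exact mul_le_one₀ (phi_le hphi hy) (by positivity)
      (Real.rpow_le_one h2 (XX_le γ (hv1 y hy)) hp.le)
  have hi := Sint_int hΩ hρ jj_contDiff.continuous jj_supp hgc hgb (Real.log ‖x‖)
  set K := (Real.exp (-N) * Real.exp (γ * p) * C ^ (-p) * 4 ^ (-α)) *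
      Real.exp ((N - α + γ * p) * Real.log ‖x‖) with hK
  have hK0 : 0 ≤ K := by rw [hK]; positivity
  rw [← ENNReal.ofReal_le_iff_le_toReal hfin.ne]
  unfold Sint
  rw [← integral_const_mul, ofReal_integral_eq_lintegral_ofReal (hi.const_mul K)]
  · unfold rieszConv
    haveI : Nonempty (Fin N) := ⟨⟨0, by omega⟩⟩
    have hne : ∀ᵐ y ∂(volume.restrict (coneGT N ρ Ω)), y ≠ x :=
      ae_restrict_of_ae (by rw [ae_iff]; simp)
    refine lintegral_mono_ae ?_
    filter_upwards [ae_restrict_mem hU.measurableSet, hne] with y hy hyx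
    apply ENNReal.ofReal_le_ofReal
    by_cases hl : Real.log ‖x‖ - Real.log ‖y‖ ∈ Icc (-1:ℝ) 1
    · have hny : 0 < ‖y‖ := hρ.trans hy.1
      refine riesz_pt (V := v y) (Nat.cast_nonneg N) hα hp hγ hC hl (hX0 y hy) (XX_eq γ v y)
        (huv y hy) (by simpa [sub_eq_zero] using hyx.symm) ?_ (jj_nonneg _) (jj_le_one _)
        (phi_pos hphi hy).le (phi_le hphi hy)
      have h1 : ‖y‖ ≤ Real.exp 1 * ‖x‖ := by
        rw [← Real.log_le_log_iff hny (by positivity), Real.log_mul (Real.exp_pos _).ne' hnx.ne',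
          Real.log_exp]
        linarith [hl.1]
      have h2 := Real.exp_one_lt_three
      rw [Real.exp_log hnx]
      have h3 := norm_sub_le x y
      nlinarith
    · rw [jj_zero hl]
      simp only [zero_mul, mul_zero]
      have : 0 ≤ u y := le_trans (div_nonneg (hv0 y hy).le hC.le) (huv y hy)
      positivity
  · filter_upwards [ae_restrict_mem hU.measurableSet] with y hy
    have h1 := phi_pos hphi hy
    have h2 := hX0 y hy
    have h3 := jj_nonneg (Real.log ‖x‖ - Real.log ‖y‖)
    simp only [Pi.zero_apply]
    positivity
end

theorem gammaStar_eq {N : ℕ} {lam1 μ : ℝ} (hμ : μ ≤ CHconst N lam1) :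
    gammaStar N lam1 μ * (gammaStar N lam1 μ + N - 2) = lam1 - μ := by
  unfold CHconst at hμ
  unfold gammaStar
  have h : 0 ≤ ((N : ℝ) - 2) ^ 2 + 4 * (lam1 - μ) := by nlinarith
  have := Real.sq_sqrt h
  nlinarith

theorem main_aux
    (N : ℕ) (hN : 2 ≤ N) (Ω : Set (Euc N)) (hΩ : IsConeDomain N Ω)
    (lam1 : ℝ) (φ : Euc N → ℝ) (hphi : DirichletEigenpair N Ω lam1 φ)
    (α p q ρ μ : ℝ) (hα : 0 ≤ α) (hp : 0 < p) (hq : 0 < q) (hρ : 0 < ρ)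
    (hμ : μ ≤ CHconst N lam1)
    (hcrit : (p + q - 1) * (-(gammaStar N lam1 μ)) = (N : ℝ) - α + 2)
    (hq1 : 1 < q) (u : Euc N → ℝ) (hu : IsPosSolE N ρ μ α p q Ω u) : False := by
  have hγe := gammaStar_eq hμ
  have hN' : (2:ℝ) ≤ N := by exact_mod_cast hN
  have hγ0 : gammaStar N lam1 μ ≤ 0 := by
    unfold gammaStar
    have := Real.sqrt_nonneg (((N : ℝ) - 2) ^ 2 + 4 * (lam1 - μ))
    linarith
  have hγκ : 0 ≤ 2 - N - 2 * gammaStar N lam1 μ := by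
    unfold gammaStar
    have := Real.sqrt_nonneg (((N : ℝ) - 2) ^ 2 + 4 * (lam1 - μ))
    linarith
  set γ := gammaStar N lam1 μ
  obtain ⟨γ', hγ'⟩ : ∃ γ', γ' = 2 - N - γ := ⟨_, rfl⟩
  have hsum : γ + γ' = 2 - N := by rw [hγ']; ring
  have hγ'e : γ' * (γ' + N - 2) = lam1 - μ := by rw [hγ', ← hγe]; ring
  have hκ : 0 ≤ γ' - γ := by rw [hγ']; linarith
  obtain ⟨v, C, s, hC, hs, hv, hv0, hv1, huv, hvL⟩ := exists_v hΩ hphi hρ hγe hq1 hu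
  obtain ⟨-, -, -, hfin, -⟩ := hu
  have hP := (phi_c2 hphi hρ).continuousOn
  have hP0 : ∀ x ∈ coneGT N ρ Ω, 0 ≤ PhiExt N φ x := fun x hx => (phi_pos hphi hx).le
  have hP1 : ∀ x ∈ coneGT N ρ Ω, PhiExt N φ x ≤ 1 := fun x hx => phi_le hphi hx
  set X := XX N γ v with hX
  have hXc : ContinuousOn X (coneGT N ρ Ω) := XX_cont hρ γ hv
  have hX0' : ∀ y ∈ coneGT N ρ Ω, 0 < X y := fun y hy => mul_pos (hv0 y hy) (Real.exp_pos _)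
  have hX0 : ∀ y ∈ coneGT N ρ Ω, 0 ≤ X y := fun y hy => (hX0' y hy).le
  have hX1 : ∀ y ∈ coneGT N ρ Ω, X y ≤ 1 := fun y hy => XX_le γ (hv1 y hy)
  have hgc : ContinuousOn (fun x => PhiExt N φ x * X x) (coneGT N ρ Ω) := hP.mul hXc
  have hgb0 : ∀ x ∈ coneGT N ρ Ω, PhiExt N φ x * X x ≤ 1 := fun x hx =>
    mul_le_one₀ (hP1 x hx) (hX0 x hx) (hX1 x hx)
  have hgb : ∀ x ∈ coneGT N ρ Ω, |PhiExt N φ x * X x| ≤ 1 := fun x hx => by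
    rw [abs_of_nonneg (mul_nonneg (hP0 x hx) (hX0 x hx))]; exact hgb0 x hx
  have hU := isOpen_coneGT hΩ hρ
  set m := Sint N Ω ρ jj (fun x => PhiExt N φ x * X x) with hm
  set m1 := Sint N Ω ρ (deriv jj) (fun x => PhiExt N φ x * X x) with hm1
  set m2 := Sint N Ω ρ (deriv (deriv jj)) (fun x => PhiExt N φ x * X x) with hm2
  have hd1 : ∀ t, HasDerivAt m (m1 t) t := fun t =>
    Sint_deriv hΩ hρ (jj_contDiff.of_le (by norm_num)) jj_supp hgc hgb t
  have hd2 : ∀ t, HasDerivAt m1 (m2 t) t := fun t =>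
    Sint_deriv hΩ hρ (djj_contDiff.of_le (by norm_num)) (deriv_supp jj_supp) hgc hgb t
  have hm0 : ∀ t, 0 ≤ m t := fun t => setIntegral_nonneg hU.measurableSet fun x hx =>
    mul_nonneg (mul_nonneg (jj_nonneg _) (Real.exp_nonneg _)) (mul_nonneg (hP0 x hx) (hX0 x hx))
  have hmB : ∀ t, m t ≤ Bd N := fun t =>
    (Sint_mono hΩ hρ hgc continuousOn_const hgb (C' := 1) (by simp) t hgb0).trans
      (Sint_one_le hΩ hρ t)
  have hA0 : ∀ x, 0 ≤ (rieszConv N α ρ Ω (fun y => u y ^ p) x).toReal :=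
    fun x => ENNReal.toReal_nonneg
  have hvL0 : ∀ x ∈ coneGT N ρ Ω, 0 ≤ -lap N v x - μ * ‖x‖ ^ (-(2:ℝ)) * v x := fun x hx => by
    refine le_trans ?_ (hvL x hx)
    have h1 := hA0 x
    have h2 : 0 ≤ v x / C := div_nonneg (hv0 x hx).le hC.le
    positivity
  -- first step: monotonicity
  have hmono1 : ∀ t, Real.log ρ + 1 < t → 0 ≤ m1 t := by
    refine ode_mono hκ hd1 hd2 hm0 fun t ht => ?_
    have := ode_ineq hΩ hphi hρ hsum hγ'e le_rfl hv hv0 hv1 (Y := fun _ => 0) continuousOn_const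
      (fun _ _ => le_rfl) (fun _ _ => zero_le_one) (fun x hx => by simpa using hvL0 x hx) ht
    rw [zero_mul] at this
    linarith
  set t1 := Real.log ρ + 2 with ht1
  have hmono : MonotoneOn m (Ici t1) := by
    apply monotoneOn_of_deriv_nonneg (convex_Ici _)
    · exact fun t _ => (hd1 t).continuousAt.continuousWithinAt
    · exact fun t _ => (hd1 t).differentiableAt.differentiableWithinAt
    · intro t ht
      rw [(hd1 t).deriv]
      rw [interior_Ici] at ht
      have ht' : t1 < t := ht
      exact hmono1 t (by linarith)
  obtain ⟨c, hcd⟩ : ∃ c, c = m t1 := ⟨_, rfl⟩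
  have hc : 0 < c := by
    rw [hcd]
    exact Sint_pos hΩ hρ hgc hgb (fun x hx => mul_pos (phi_pos hphi hx) (hX0' x hx)) (by linarith)
  have hmc : ∀ t, t1 ≤ t → c ≤ m t := fun t ht => by
    rw [hcd]; exact hmono self_mem_Ici ht ht
  have hB := Bd_nonneg N
  -- second step
  set K0 := Real.exp (-N) * Real.exp (γ * p) * C ^ (-p) * 4 ^ (-α) with hK0
  have hK0p : 0 < K0 := by rw [hK0]; positivity
  set c1 := (c / (2 * (Bd N + 1))) ^ p * (c / 2) with hc1
  have hc1p : 0 < c1 := by rw [hc1]; positivity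
  set c2 := (c / (2 * (Bd N + 1))) ^ q * (c / 2) with hc2
  have hc2p : 0 < c2 := by rw [hc2]; positivity
  set c0 := s * C ^ (-q) * K0 * c1 with hc0
  have hc0p : 0 < c0 := by rw [hc0]; positivity
  have hmain : ∀ x ∈ coneGT N ρ Ω, t1 ≤ Real.log ‖x‖ →
      c0 * Real.exp ((γ - 2) * Real.log ‖x‖) * X x ^ q ≤
        -lap N v x - μ * ‖x‖ ^ (-(2:ℝ)) * v x := by
    intro x hx hxt
    refine le_trans ?_ (hvL x hx)
    have h1 := riesz_lower hN hΩ hphi hρ hα hp hγ0 hC hv hv0 hv1 huv hx (hfin x hx)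
    have h2 := Sint_lower hΩ hρ hP hXc hP0 hP1 hX0 hX1 hp hc (hmc _ hxt)
    set A := (rieszConv N α ρ Ω (fun y => u y ^ p) x).toReal
    set l := Real.log ‖x‖ with hl
    have h3 : K0 * Real.exp ((N - α + γ * p) * l) * c1 ≤ A :=
      (mul_le_mul_of_nonneg_left h2 (by positivity)).trans h1
    have h4 : (v x / C) ^ q = Real.exp (γ * q * l) * X x ^ q * C ^ (-q) := by
      rw [Real.div_rpow (hv0 x hx).le hC.le, XX_eq γ v x,
        Real.mul_rpow (Real.exp_nonneg _) (hX0 x hx), ← Real.exp_mul, Real.rpow_neg hC.le,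
        div_eq_mul_inv, mul_right_comm γ q]
    have hXq : 0 ≤ X x ^ q := Real.rpow_nonneg (hX0 x hx) _
    have h5 : Real.exp ((γ - 2) * l) = Real.exp (γ * q * l) * Real.exp ((N - α + γ * p) * l) := by
      rw [← Real.exp_add]; congr 1; linear_combination l * hcrit
    rw [h4]
    calc _ = s * (Real.exp (γ * q * l) * X x ^ q * C ^ (-q)) *
          (K0 * Real.exp ((N - α + γ * p) * l) * c1) := by rw [h5, hc0]; ring
      _ ≤ _ := mul_le_mul_of_nonneg_left h3 (by positivity)
  set Y : Euc N → ℝ := fun x => X x ^ q * max 0 (min 1 (Real.log ‖x‖ - t1)) with hY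
  have hYc : ContinuousOn Y (coneGT N ρ Ω) :=
    (hXc.rpow_const (fun x _ => Or.inr hq.le)).mul
      (logn_continuousOn hρ (η := fun l => max 0 (min 1 (l - t1))) (by fun_prop))
  have hχ1 : ∀ l : ℝ, max 0 (min 1 (l - t1)) ≤ 1 := fun l => max_le zero_le_one (min_le_left _ _)
  have hχ0 : ∀ l : ℝ, 0 ≤ max 0 (min 1 (l - t1)) := fun l => le_max_left _ _
  have hXq0 : ∀ x ∈ coneGT N ρ Ω, 0 ≤ X x ^ q := fun x hx => Real.rpow_nonneg (hX0 x hx) _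
  have hYle : ∀ x ∈ coneGT N ρ Ω, Y x ≤ X x ^ q := fun x hx =>
    mul_le_of_le_one_right (hXq0 x hx) (hχ1 _)
  have hY0 : ∀ x ∈ coneGT N ρ Ω, 0 ≤ Y x := fun x hx => mul_nonneg (hXq0 x hx) (hχ0 _)
  have hY1 : ∀ x ∈ coneGT N ρ Ω, Y x ≤ 1 := fun x hx =>
    (hYle x hx).trans (Real.rpow_le_one (hX0 x hx) (hX1 x hx) hq.le)
  have hYL : ∀ x ∈ coneGT N ρ Ω, c0 * Real.exp ((γ - 2) * Real.log ‖x‖) * Y x ≤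
      -lap N v x - μ * ‖x‖ ^ (-(2:ℝ)) * v x := by
    intro x hx
    rcases le_total t1 (Real.log ‖x‖) with h | h
    · exact (mul_le_mul_of_nonneg_left (hYle x hx) (by positivity)).trans (hmain x hx h)
    · have : Y x = 0 := by
        simp only [hY]
        rw [max_eq_left ((min_le_right _ _).trans (by linarith)), mul_zero]
      rw [this, mul_zero]
      exact hvL0 x hx
  refine ode_false (T := t1 + 2) (c := c0 * c2) hκ (by positivity) hd1 hd2 hm0 hmB
    (fun t ht => hmono1 t (by linarith)) fun t ht => ?_
  have h1 := ode_ineq hΩ hphi hρ hsum hγ'e hc0p.le hv hv0 hv1 hYc hY0 hY1 hYL (t := t)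
    (by linarith)
  have h2 := Sint_lower hΩ hρ hP hXc hP0 hP1 hX0 hX1 hq hc (hmc t (by linarith))
  have h3 : Sint N Ω ρ jj (fun x => PhiExt N φ x * Y x) t =
      Sint N Ω ρ jj (fun x => PhiExt N φ x * X x ^ q) t := by
    unfold Sint
    refine integral_congr_ae (Eventually.of_forall fun x => ?_)
    by_cases h : t - Real.log ‖x‖ ∈ Icc (-1:ℝ) 1
    · have : Y x = X x ^ q := by
        simp only [hY]
        rw [min_eq_left (by linarith [h.2]), max_eq_right zero_le_one, mul_one]
      simp only [this]
    · simp only [jj_zero h, zero_mul]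
  rw [h3] at h1
  have h4 := mul_le_mul_of_nonneg_left h2 hc0p.le
  have h5 : c0 * c2 ≤ -(m2 t - (γ' - γ) * m1 t) := h4.trans h1
  linarith

/-- if `μ ≤ C_{H,Ω}`, `(p+q-1)·|γ_*| = N - α + 2` and `q > 1` then `(E)` has
no positive solution. -/
theorem no_solution_of_pq_critical
    (N : ℕ) (hN : 2 ≤ N) (Ω : Set (Euc N)) (hΩ : IsConeDomain N Ω)
    (lam1 : ℝ) (φ : Euc N → ℝ) (hphi : DirichletEigenpair N Ω lam1 φ)
    (α p q ρ μ : ℝ) (hα : 0 ≤ α) (hαN : α < N) (hp : 0 < p) (hq : 0 < q) (hρ : 0 < ρ)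
    (hμ : μ ≤ CHconst N lam1)
    (hcrit : (p + q - 1) * (-(gammaStar N lam1 μ)) = (N : ℝ) - α + 2)
    (hq1 : 1 < q) :
    ¬ ∃ u : Euc N → ℝ, IsPosSolE N ρ μ α p q Ω u := by
  rintro ⟨u, hu⟩
  exact main_aux N hN Ω hΩ lam1 φ hphi α p q ρ μ hα hp hq hρ hμ hcrit hq1 u hu
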